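/- arXiv:math-ph/9812015 — 10 statements merged into one kernel-verified Lean document; each statement's English description precedes it below -/
import Mathlib

section
/- Let (Ω, F, μ) be a probability space, β ∈ ℝ, T : Ω → Ω a measurable map with T ∘ T = id, and R : Ω → ℝ a bounded measurable function satisfying R ∘ T = −R. Assume the Gibbs change-of-variables property: for every bounded measurable f : Ω → ℝ, ∫ (f ∘ T) dμ = ∫ f · exp(−β R) dμ. Then for every λ ∈ ℝ, ∫ exp(−λ β R) dμ = ∫ exp(−(1−λ) β R) dμ. -/
open MeasureTheory Real

/-!
The Gibbs property, tested on indicators, says that `T` pushes `μ` forward to `exp (-βR) μ`.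
Changing variables along `T` therefore flips the sign of `R` at the cost of a factor `exp (-βR)`,
which turns the exponent `λβR` into `-(1 - λ)βR`. Constant test functions give
`∫ exp (-βR) ∂μ = μ Ω < ∞`, so the weight is integrable.
-/

open scoped ENNReal

section PushforwardDensity

variable {Ω Ω' : Type*} [MeasurableSpace Ω] [MeasurableSpace Ω'] {μ : Measure Ω} {ν : Measure Ω'}

lemma integrable_of_integral_eq_measureReal_univ [IsFiniteMeasure μ] {ρ : Ω → ℝ}
    (h : ∫ ω, ρ ω ∂μ = μ.real Set.univ) : Integrable ρ μ := by
  obtain rfl | _ := eq_zero_or_neZero μ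
  · exact integrable_zero_measure
  · exact .of_integral_ne_zero (h ▸ measureReal_univ_ne_zero)

lemma map_eq_withDensity_of_integral_comp_eq [IsFiniteMeasure μ] {T : Ω → Ω'}
    (hT : AEMeasurable T μ) {ρ : Ω' → ℝ} (hρ : Integrable ρ ν) (hρ_nonneg : 0 ≤ᵐ[ν] ρ)
    (h : ∀ f : Ω' → ℝ, Measurable f → (∃ C : ℝ, ∀ y, |f y| ≤ C) →
      ∫ ω, f (T ω) ∂μ = ∫ y, f y * ρ y ∂ν) :
    μ.map T = ν.withDensity fun y => .ofReal (ρ y) := by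
  ext s hs
  let f : Ω' → ℝ := s.indicator 1
  have hf : Measurable f := measurable_one.indicator hs
  have hf_le : ∀ y, |f y| ≤ 1 := fun y => by by_cases hy : y ∈ s <;> simp [f, hy]
  have measureReal_eq : (μ.map T).real s = ∫ y in s, ρ y ∂ν := calc
    (μ.map T).real s = ∫ y, f y ∂μ.map T := (integral_indicator_one hs).symm
    _ = ∫ ω, f (T ω) ∂μ := integral_map hT hf.aestronglyMeasurable
    _ = ∫ y, f y * ρ y ∂ν := h f hf ⟨1, hf_le⟩
    _ = ∫ y in s, ρ y ∂ν := by
      simp only [f, ← Set.indicator_mul_left, Pi.one_apply, one_mul, integral_indicator hs]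
  calc
    μ.map T s = .ofReal ((μ.map T).real s) := (ofReal_measureReal).symm
    _ = ∫⁻ y in s, .ofReal (ρ y) ∂ν := by
      rw [measureReal_eq,
        ofReal_integral_eq_lintegral_ofReal hρ.restrict (ae_restrict_of_ae hρ_nonneg)]
    _ = ν.withDensity (fun y => .ofReal (ρ y)) s := (withDensity_apply _ hs).symm

end PushforwardDensity

section Fluctuation

variable {Ω : Type*} [MeasurableSpace Ω] {μ : Measure Ω} {T : Ω → Ω}

lemma lintegral_comp_neg_of_map_eq_withDensity {E : Type*} [MeasurableSpace E] [Neg E]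
    (hT : AEMeasurable T μ) {ρ : Ω → ℝ≥0∞} (hρ : AEMeasurable ρ μ)
    (hmap : μ.map T = μ.withDensity ρ) {X : Ω → E} (hX : AEMeasurable X μ)
    (hXT : ∀ᵐ ω ∂μ, X (T ω) = -X ω) {g : E → ℝ≥0∞} (hg : Measurable g) :
    ∫⁻ ω, g (-X ω) ∂μ = ∫⁻ ω, ρ ω * g (X ω) ∂μ := by
  have hgX : AEMeasurable (fun ω => g (X ω)) μ := hg.comp_aemeasurable hX
  have hgX_map : AEMeasurable (fun ω => g (X ω)) (μ.map T) :=
    hmap ▸ hgX.mono_ac (withDensity_absolutelyContinuous μ ρ)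
  calc
    ∫⁻ ω, g (-X ω) ∂μ = ∫⁻ ω, g (X (T ω)) ∂μ :=
      lintegral_congr_ae (hXT.mono fun ω hω => by simp only [hω])
    _ = ∫⁻ ω, g (X ω) ∂μ.map T := (lintegral_map' hgX_map hT).symm
    _ = ∫⁻ ω, ρ ω * g (X ω) ∂μ := by
      rw [hmap, lintegral_withDensity_eq_lintegral_mul₀ hρ hgX]
      rfl

lemma lintegral_exp_neg_mul_eq_of_map_eq_withDensity (hT : AEMeasurable T μ) {W : Ω → ℝ}
    (hW : AEMeasurable W μ) (hWT : ∀ᵐ ω ∂μ, W (T ω) = -W ω)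
    (hmap : μ.map T = μ.withDensity fun ω => .ofReal (exp (-W ω))) (s : ℝ) :
    ∫⁻ ω, .ofReal (exp (-s * W ω)) ∂μ = ∫⁻ ω, .ofReal (exp (-(1 - s) * W ω)) ∂μ := calc
  ∫⁻ ω, .ofReal (exp (-s * W ω)) ∂μ = ∫⁻ ω, .ofReal (exp (s * -W ω)) ∂μ := by
    simp only [neg_mul, mul_neg]
  _ = ∫⁻ ω, .ofReal (exp (-W ω)) * .ofReal (exp (s * W ω)) ∂μ :=
    lintegral_comp_neg_of_map_eq_withDensity hT hW.neg.exp.ennreal_ofReal hmap hW hWT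
      (measurable_id.const_mul s).exp.ennreal_ofReal
  _ = ∫⁻ ω, .ofReal (exp (-(1 - s) * W ω)) ∂μ := by
    refine lintegral_congr fun ω => ?_
    rw [← ENNReal.ofReal_mul (exp_nonneg _), ← exp_add]
    ring_nf

-- Stated in `ℝ≥0∞` because the Bochner integrals would be `0` when both sides are infinite.
theorem fluctuation_identity_of_gibbs_general [IsFiniteMeasure μ] (β : ℝ)
    (hT : AEMeasurable T μ) {R : Ω → ℝ} (hR : AEMeasurable R μ)
    (hRT : ∀ᵐ ω ∂μ, R (T ω) = -R ω)
    (hGibbs : ∀ f : Ω → ℝ, Measurable f → (∃ C : ℝ, ∀ ω, |f ω| ≤ C) →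
      ∫ ω, f (T ω) ∂μ = ∫ ω, f ω * exp (-β * R ω) ∂μ) (lam : ℝ) :
    ∫⁻ ω, .ofReal (exp (-lam * β * R ω)) ∂μ =
      ∫⁻ ω, .ofReal (exp (-(1 - lam) * β * R ω)) ∂μ := by
  have weight_integrable : Integrable (fun ω => exp (-β * R ω)) μ :=
    integrable_of_integral_eq_measureReal_univ <| by
      simpa using (hGibbs 1 measurable_one ⟨1, by simp⟩).symm
  have hmap : μ.map T = μ.withDensity fun ω => .ofReal (exp (-(β * R ω))) := by
    simpa only [neg_mul] using map_eq_withDensity_of_integral_comp_eq hT weight_integrable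
      (.of_forall fun _ => exp_nonneg _) hGibbs
  have hβRT : ∀ᵐ ω ∂μ, β * R (T ω) = -(β * R ω) :=
    hRT.mono fun ω hω => by rw [hω, mul_neg]
  simpa only [mul_assoc] using
    lintegral_exp_neg_mul_eq_of_map_eq_withDensity hT (hR.const_mul β) hβRT hmap lam

end Fluctuation

/-- The finite-volume Gibbs fluctuation identity (equation (1.14) of the paper):
if `μ` is a probability measure, `T` an involution, `R` a bounded measurable function
antisymmetric under `T`, and the Gibbs change-of-variables property
`∫ f ∘ T dμ = ∫ f · exp(-β R) dμ` holds for every bounded measurable `f`, then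
`∫ exp(-λ β R) dμ = ∫ exp(-(1-λ) β R) dμ` for every real `λ`. -/
theorem fluctuation_identity_of_gibbs
    {Ω : Type*} [MeasurableSpace Ω] (μ : Measure Ω) [IsProbabilityMeasure μ]
    (β : ℝ) (T : Ω → Ω) (hTmeas : Measurable T) (hTinv : T ∘ T = id)
    (R : Ω → ℝ) (hRmeas : Measurable R) (hRbdd : ∃ C : ℝ, ∀ ω, |R ω| ≤ C)
    (hRanti : R ∘ T = fun ω => - R ω)
    (hGibbs : ∀ f : Ω → ℝ, Measurable f → (∃ C : ℝ, ∀ ω, |f ω| ≤ C) →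
      ∫ ω, f (T ω) ∂μ = ∫ ω, f ω * Real.exp (-β * R ω) ∂μ) :
    ∀ lam : ℝ,
      ∫ ω, Real.exp (-lam * β * R ω) ∂μ =
        ∫ ω, Real.exp (-(1 - lam) * β * R ω) ∂μ := by
  intro lam
  simp only [integral_eq_lintegral_of_nonneg_ae (.of_forall fun _ => exp_nonneg _)
    (hRmeas.const_mul _).exp.aestronglyMeasurable, fluctuation_identity_of_gibbs_general β
    hTmeas.aemeasurable hRmeas.aemeasurable (.of_forall (congrFun hRanti)) hGibbs lam]
end

section
/- Let (Ω, F, μ) be a probability space, β ∈ ℝ, m ≥ 1, E = (E^1,…,E^m) ∈ ℝ^m, T : Ω → Ω a measurable map with T ∘ T = id, and R^0, R^1, …, R^m : Ω → ℝ bounded measurable functions with R^α ∘ T = −R^α for every α = 0, 1, …, m. Assume that for every bounded measurable f : Ω → ℝ, ∫ (f ∘ T) dμ = ∫ f · exp(−β (R^0 + Σ_{α=1}^m E^α R^α)) dμ. Then for every (h_1,…,h_m) ∈ ℝ^m, ∫ exp(−β R^0 − β Σ_{α=1}^m h_α E^α R^α) dμ = ∫ exp(−β Σ_{α=1}^m (1−h_α)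 E^α R^α) dμ. -/
open MeasureTheory Real

/-!
Test the change-of-variables formula against `exp (β ∑ (1 - h α) E α R α)`. The Gibbs weight
cancels part of this exponent and leaves `-β R0 - β ∑ h α E α R α`, while composition with `T`
only reverses its sign.
-/

lemma exists_norm_sum_smul_le {X ι 𝕜 F : Type*} [SeminormedRing 𝕜] [SeminormedAddCommGroup F]
    [Module 𝕜 F] [IsBoundedSMul 𝕜 F] {s : Finset ι} {f : ι → X → F}
    (hf : ∀ i ∈ s, ∃ C : ℝ, ∀ x, ‖f i x‖ ≤ C) (c : ι → 𝕜) :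
    ∃ C : ℝ, ∀ x, ‖∑ i ∈ s, c i • f i x‖ ≤ C := by
  choose! C hC using hf
  exact ⟨∑ i ∈ s, ‖c i‖ * C i, fun x => norm_sum_le_of_le s fun i hi =>
    (norm_smul_le (c i) (f i x)).trans (mul_le_mul_of_nonneg_left (hC i hi x) (norm_nonneg _))⟩

lemma exists_abs_exp_mul_le {X : Type*} {U : X → ℝ} (hU : ∃ C : ℝ, ∀ x, |U x| ≤ C) (t : ℝ) :
    ∃ C : ℝ, ∀ x, |exp (t * U x)| ≤ C := by
  obtain ⟨C, hC⟩ := hU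
  refine ⟨exp (|t| * C), fun x => ?_⟩
  rw [abs_exp, exp_le_exp]
  calc t * U x ≤ |t * U x| := le_abs_self _
    _ = |t| * |U x| := abs_mul _ _
    _ ≤ |t| * C := mul_le_mul_of_nonneg_left (hC x) (abs_nonneg t)

lemma integral_exp_mul_mul_eq_integral_exp_neg_mul {Ω : Type*} [MeasurableSpace Ω] {μ : Measure Ω}
    {T : Ω → Ω} {w U : Ω → ℝ}
    (hw : ∀ f : Ω → ℝ, Measurable f → (∃ C : ℝ, ∀ ω, |f ω| ≤ C) →
      ∫ ω, f (T ω) ∂μ = ∫ ω, f ω * w ω ∂μ)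
    (hU_meas : Measurable U) (hU_bdd : ∃ C : ℝ, ∀ ω, |U ω| ≤ C)
    (hU_anti : ∀ ω, U (T ω) = -U ω) (t : ℝ) :
    ∫ ω, exp (t * U ω) * w ω ∂μ = ∫ ω, exp (-t * U ω) ∂μ := by
  rw [← hw (fun ω => exp (t * U ω)) (by fun_prop) (exists_abs_exp_mul_le hU_bdd t)]
  simp only [hU_anti, mul_neg, neg_mul]

theorem multi_field_fluctuation_identity_of_gibbs_general
    {Ω ι : Type*} [MeasurableSpace Ω] [Fintype ι] (μ : Measure Ω) [IsFiniteMeasure μ]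
    (β : ℝ) (E : ι → ℝ) (T : Ω → Ω) (R0 : Ω → ℝ) (R : ι → Ω → ℝ)
    (hRmeas : ∀ α, Measurable (R α)) (hRbdd : ∀ α, ∃ C : ℝ, ∀ ω, |R α ω| ≤ C)
    (hRanti : ∀ α, R α ∘ T = fun ω => -R α ω)
    (hGibbs : ∀ f : Ω → ℝ, Measurable f → (∃ C : ℝ, ∀ ω, |f ω| ≤ C) →
      ∫ ω, f (T ω) ∂μ = ∫ ω, f ω * exp (-β * (R0 ω + ∑ α, E α * R α ω)) ∂μ)
    (h : ι → ℝ) :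
    ∫ ω, exp (-β * R0 ω - β * ∑ α, h α * E α * R α ω) ∂μ =
      ∫ ω, exp (-β * ∑ α, (1 - h α) * E α * R α ω) ∂μ := by
  have weight_split (ω : Ω) : exp (-β * R0 ω - β * ∑ α, h α * E α * R α ω) =
      exp (β * ∑ α, (1 - h α) * E α * R α ω) *
        exp (-β * (R0 ω + ∑ α, E α * R α ω)) := by
    rw [← exp_add]
    simp only [sub_mul, one_mul, Finset.sum_sub_distrib]
    ring_nf
  have tilt_bdd : ∃ C : ℝ, ∀ ω, |∑ α, (1 - h α) * E α * R α ω| ≤ C :=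
    exists_norm_sum_smul_le (s := Finset.univ) (f := R) (fun α _ => hRbdd α)
      fun α => (1 - h α) * E α
  have tilt_anti (ω : Ω) : ∑ α, (1 - h α) * E α * R α (T ω) =
      -∑ α, (1 - h α) * E α * R α ω := by
    have hR (α : ι) : R α (T ω) = -R α ω := congrFun (hRanti α) ω
    simp only [hR, mul_neg, Finset.sum_neg_distrib]
  simp only [weight_split]
  exact integral_exp_mul_mul_eq_integral_exp_neg_mul hGibbs (by fun_prop) tilt_bdd tilt_anti β

/-- The multi-field exact Gibbs identity (equation (toep) in the proof of Theorem 1):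
if `μ` is a probability measure, `T` an involution, `R0, R 1, …, R m` bounded measurable
functions antisymmetric under `T`, and the Gibbs change-of-variables property holds for
the Hamiltonian `R0 + Σ_α E^α R^α`, then for every `h ∈ ℝ^m`,
`∫ exp(-β R0 - β Σ_α h_α E^α R^α) dμ = ∫ exp(-β Σ_α (1-h_α) E^α R^α) dμ`. -/
theorem multi_field_fluctuation_identity_of_gibbs
    {Ω : Type*} [MeasurableSpace Ω] (μ : Measure Ω) [IsProbabilityMeasure μ]
    (β : ℝ) (m : ℕ) (hm : 1 ≤ m) (E : Fin m → ℝ)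
    (T : Ω → Ω) (hTmeas : Measurable T) (hTinv : T ∘ T = id)
    (R0 : Ω → ℝ) (hR0meas : Measurable R0) (hR0bdd : ∃ C : ℝ, ∀ ω, |R0 ω| ≤ C)
    (hR0anti : R0 ∘ T = fun ω => - R0 ω)
    (R : Fin m → Ω → ℝ) (hRmeas : ∀ α, Measurable (R α))
    (hRbdd : ∀ α, ∃ C : ℝ, ∀ ω, |R α ω| ≤ C)
    (hRanti : ∀ α, R α ∘ T = fun ω => - R α ω)
    (hGibbs : ∀ f : Ω → ℝ, Measurable f → (∃ C : ℝ, ∀ ω, |f ω| ≤ C) →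
      ∫ ω, f (T ω) ∂μ =
        ∫ ω, f ω * Real.exp (-β * (R0 ω + ∑ α, E α * R α ω)) ∂μ) :
    ∀ h : Fin m → ℝ,
      ∫ ω, Real.exp (-β * R0 ω - β * ∑ α, h α * E α * R α ω) ∂μ =
        ∫ ω, Real.exp (-β * ∑ α, (1 - h α) * E α * R α ω) ∂μ := by
  exact multi_field_fluctuation_identity_of_gibbs_general μ β E T R0 R hRmeas hRbdd hRanti hGibbs
end

section
/- Let (Ω, F, μ) be a probability space, β ∈ ℝ, m ≥ 1, and E = (E^1,…,E^m) ∈ ℝ^m. Let (a_n)_{n≥1} be positive reals with a_n → ∞. For each n let T_n : Ω → Ω be a measurable map with T_n ∘ T_n = id, and let R_n^0, R_n^1, …, R_n^m : Ω → ℝ be bounded measurable functions with R_n^α ∘ T_n = −R_n^α for α = 0, 1, …, m, such that for every bounded measurable f : Ω → ℝ, ∫ (f ∘ T_n) dμ = ∫ f · exp(−β (R_n^0 + Σ_{α=1}^m E^α R_n^α)) dμ. Let S_n^1, …, S_n^m : Ω → ℝ be bounded measurable functions with ‖R_n^α − 2 S_n^α‖_∞ / a_n → 0 for each α = 1,…,m,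 and assume ‖R_n^0‖_∞ / a_n → 0. Fix λ = (λ_1,…,λ_m) ∈ ℝ^m and suppose that both limits p(λ) = −lim_n (1/a_n) · ln ∫ exp(−β Σ_{α=1}^m λ_α S_n^α) dμ and p(2E−λ) = −lim_n (1/a_n) · ln ∫ exp(−β Σ_{α=1}^m (2E^α − λ_α) S_n^α) dμ exist in ℝ. Then p(λ) = p(2E−λ). -/
open MeasureTheory Real Filter

/-!
For an antisymmetric `V` (that is, `V ∘ T = -V`), testing the Gibbs identity with density
`exp (-β W)` against `exp (β V)` gives the exact finite-volume symmetry
`∫ exp (-β V) = ∫ exp (-β (W - V))`. It is applied to `V = ∑ (λ_α / 2) R^α` and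
`W = R⁰ + ∑ E^α R^α`, so that `W - V = R⁰ + ∑ ((2 E^α - λ_α) / 2) R^α`. Up to a uniform `o(a n)`
the exponents `V` and `W - V` are `∑ λ_α S^α` and `∑ (2 E^α - λ_α) S^α`, and `log ∫ exp` is
`1`-Lipschitz in the exponent for the supremum norm, so the two free energies agree up to `o(a n)`.
-/

section CumulantGeneratingFunction

open ProbabilityTheory Asymptotics

variable {Ω κ : Type*} [MeasurableSpace Ω] {μ : Measure Ω}

lemma integrable_exp_mul_of_abs_sub_le {X Y : Ω → ℝ} {t d : ℝ} (hX : AEMeasurable X μ)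
    (hY : Integrable (fun ω => exp (t * Y ω)) μ) (hXY : ∀ᵐ ω ∂μ, |t * X ω - t * Y ω| ≤ d) :
    Integrable (fun ω => exp (t * X ω)) μ := by
  refine (hY.const_mul (exp d)).mono' (hX.const_mul t).exp.aestronglyMeasurable ?_
  filter_upwards [hXY] with ω hω
  rw [norm_eq_abs, abs_exp, ← exp_add]
  exact exp_le_exp.2 (by linarith [le_of_abs_le hω])

lemma cgf_le_cgf_add [NeZero μ] {X Y : Ω → ℝ} {t d : ℝ}
    (hX : Integrable (fun ω => exp (t * X ω)) μ) (hY : Integrable (fun ω => exp (t * Y ω)) μ)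
    (hXY : ∀ᵐ ω ∂μ, t * X ω ≤ t * Y ω + d) :
    cgf X μ t ≤ cgf Y μ t + d := by
  have hmgf : mgf X μ t ≤ mgf Y μ t * exp d := by
    rw [mgf, mgf, ← integral_mul_const]
    refine integral_mono_ae hX (hY.mul_const _) ?_
    filter_upwards [hXY] with ω hω
    rw [← exp_add]
    exact exp_le_exp.2 hω
  calc cgf X μ t ≤ log (mgf Y μ t * exp d) := log_le_log (mgf_pos_iff.2 hX) hmgf
    _ = cgf Y μ t + d := by
      rw [log_mul (mgf_pos_iff.2 hY).ne' (exp_pos d).ne', log_exp, cgf]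

lemma abs_cgf_sub_cgf_le [NeZero μ] {X Y : Ω → ℝ} {t d : ℝ} (hX : AEMeasurable X μ)
    (hY : Integrable (fun ω => exp (t * Y ω)) μ) (hXY : ∀ᵐ ω ∂μ, |t * X ω - t * Y ω| ≤ d) :
    |cgf X μ t - cgf Y μ t| ≤ d := by
  have hX' := integrable_exp_mul_of_abs_sub_le hX hY hXY
  rw [abs_sub_le_iff, sub_le_iff_le_add', sub_le_iff_le_add']
  constructor
  · exact cgf_le_cgf_add hX' hY (hXY.mono fun ω hω => by linarith [(abs_le.1 hω).2])
  · exact cgf_le_cgf_add hY hX' (hXY.mono fun ω hω => by linarith [(abs_le.1 hω).1])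

-- Little-o along `l ×ˢ ⊤` is little-o along `l`, uniformly in the second variable.
lemma isLittleO_cgf_sub_cgf [NeZero μ] {l : Filter κ} {a : κ → ℝ} {X Y : κ → Ω → ℝ} {t : ℝ}
    (hX : ∀ n, AEMeasurable (X n) μ) (hY : ∀ n, Integrable (fun ω => exp (t * Y n ω)) μ)
    (hXY : (fun p : κ × Ω => X p.1 p.2 - Y p.1 p.2) =o[l ×ˢ ⊤] (a ∘ Prod.fst)) :
    (fun n => cgf (X n) μ t - cgf (Y n) μ t) =o[l] a := by
  refine isLittleO_iff.2 fun ε hε => ?_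
  have hbound := isLittleO_iff.1 (hXY.const_mul_left t) hε
  rw [← principal_univ, eventually_prod_principal_iff] at hbound
  filter_upwards [hbound] with n hn
  refine abs_cgf_sub_cgf_le (hX n) (hY n) (.of_forall fun ω => ?_)
  simpa only [mul_sub, Function.comp_apply, norm_eq_abs] using hn ω (Set.mem_univ ω)

lemma mgf_sub_eq_mgf_of_antisymm {T : Ω → Ω} {V W : Ω → ℝ} {β : ℝ} (hV : ∀ ω, V (T ω) = -V ω)
    (hT : ∫ ω, exp (β * V (T ω)) ∂μ = ∫ ω, exp (β * V ω) * exp (-β * W ω) ∂μ) :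
    mgf (fun ω => W ω - V ω) μ (-β) = mgf V μ (-β) := calc
  mgf (fun ω => W ω - V ω) μ (-β) = ∫ ω, exp (β * V ω) * exp (-β * W ω) ∂μ := by
    refine integral_congr_ae (.of_forall fun ω => ?_)
    simp only [← exp_add]
    ring_nf
  _ = mgf V μ (-β) := by
    rw [← hT]
    simp only [hV, mgf, mul_neg, neg_mul]

end CumulantGeneratingFunction

section Asymptotics

open Asymptotics

lemma isLittleO_prod_top_of_forall_abs_le {κ Ω : Type*} {l : Filter κ} {a : κ → ℝ}
    {X : κ → Ω → ℝ} (ha : ∀ n, a n ≠ 0)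
    (hX : ∃ c : κ → ℝ, (∀ n ω, |X n ω| ≤ c n) ∧ Tendsto (fun n => c n / a n) l (nhds 0)) :
    (fun p : κ × Ω => X p.1 p.2) =o[l ×ˢ ⊤] (a ∘ Prod.fst) := by
  obtain ⟨c, hXc, hca⟩ := hX
  have hc : c =o[l] a := (isLittleO_iff_tendsto fun n hn => (ha n hn).elim).2 hca
  exact (IsBigO.of_norm_le (g := c ∘ Prod.fst) fun p => hXc p.1 p.2).trans_isLittleO
    (hc.comp_fst ⊤)

lemma isLittleO_sum_mul_sub_sum_half_mul {γ ι : Type*} [Fintype ι] {l : Filter γ} {a : γ → ℝ}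
    {R S : ι → γ → ℝ} (hRS : ∀ i, (fun p => R i p - 2 * S i p) =o[l] a) (v : ι → ℝ) :
    (fun p => ∑ i, v i * S i p - ∑ i, v i / 2 * R i p) =o[l] a := by
  have hsum : (fun p => ∑ i, -(v i / 2) * (R i p - 2 * S i p)) =o[l] a :=
    IsLittleO.fun_sum fun i _ => (hRS i).const_mul_left _
  refine hsum.congr_left fun p => ?_
  rw [← Finset.sum_sub_distrib]
  exact Finset.sum_congr rfl fun i _ => by ring

end Asymptotics

lemma exists_forall_abs_sum_mul_le {Ω ι : Type*} [Fintype ι] {R : ι → Ω → ℝ}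
    (hR : ∀ i, ∃ C : ℝ, ∀ ω, |R i ω| ≤ C) (v : ι → ℝ) :
    ∃ C : ℝ, ∀ ω, |∑ i, v i * R i ω| ≤ C := by
  choose C hC using hR
  refine ⟨∑ i, |v i| * C i, fun ω => (Finset.abs_sum_le_sum_abs _ _).trans ?_⟩
  refine Finset.sum_le_sum fun i _ => ?_
  rw [abs_mul]
  exact mul_le_mul_of_nonneg_left (hC i ω) (abs_nonneg _)

section FluctuationTheorem

open ProbabilityTheory Asymptotics

variable {Ω ι κ : Type*} [MeasurableSpace Ω] [Fintype ι] {μ : Measure Ω}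

lemma mgf_sub_sum_mul_eq_mgf_sum_mul {T : Ω → Ω} {W : Ω → ℝ} {R : ι → Ω → ℝ} {β : ℝ}
    (hRmeas : ∀ α, Measurable (R α)) (hRbdd : ∀ α, ∃ C : ℝ, ∀ ω, |R α ω| ≤ C)
    (hRanti : ∀ α, R α ∘ T = fun ω => -R α ω)
    (hGibbs : ∀ f : Ω → ℝ, Measurable f → (∃ C : ℝ, ∀ ω, |f ω| ≤ C) →
      ∫ ω, f (T ω) ∂μ = ∫ ω, f ω * exp (-β * W ω) ∂μ) (v : ι → ℝ) :
    mgf (fun ω => W ω - ∑ α, v α * R α ω) μ (-β) = mgf (fun ω => ∑ α, v α * R α ω) μ (-β) := by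
  refine mgf_sub_eq_mgf_of_antisymm (T := T) (fun ω => ?_)
    (hGibbs (fun ω => exp (β * ∑ α, v α * R α ω)) (by fun_prop) ?_)
  · have hRT : ∀ α, R α (T ω) = -R α ω := fun α => congrFun (hRanti α) ω
    simp only [hRT, mul_neg, Finset.sum_neg_distrib]
  · obtain ⟨C, hC⟩ := exists_forall_abs_sum_mul_le hRbdd v
    refine ⟨exp (|β| * C), fun ω => ?_⟩
    rw [abs_exp, exp_le_exp]
    refine (le_abs_self _).trans ?_
    rw [abs_mul]
    exact mul_le_mul_of_nonneg_left (hC ω) (abs_nonneg β)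

lemma integrable_exp_mul_sum_mul [IsFiniteMeasure μ] {R : ι → Ω → ℝ}
    (hRmeas : ∀ α, AEMeasurable (R α) μ) (hRbdd : ∀ α, ∃ C : ℝ, ∀ ω, |R α ω| ≤ C)
    (v : ι → ℝ) (t : ℝ) : Integrable (fun ω => exp (t * ∑ α, v α * R α ω)) μ := by
  obtain ⟨C, hC⟩ := exists_forall_abs_sum_mul_le hRbdd v
  exact integrable_exp_mul_of_mem_Icc (by fun_prop) (.of_forall fun ω => abs_le.1 (hC ω))

theorem fluctuation_theorem_for_gibbs_states_general
    (μ : Measure Ω) [IsFiniteMeasure μ] [NeZero μ] (β : ℝ) (E : ι → ℝ)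
    {l : Filter κ} (a : κ → ℝ) (ha : ∀ n, a n ≠ 0) (T : κ → Ω → Ω) (R0 : κ → Ω → ℝ)
    (R : κ → ι → Ω → ℝ) (hRmeas : ∀ n α, Measurable (R n α))
    (hRbdd : ∀ n α, ∃ C : ℝ, ∀ ω, |R n α ω| ≤ C)
    (hRanti : ∀ n α, R n α ∘ T n = fun ω => -R n α ω)
    (hGibbs : ∀ n, ∀ f : Ω → ℝ, Measurable f → (∃ C : ℝ, ∀ ω, |f ω| ≤ C) →
      ∫ ω, f (T n ω) ∂μ = ∫ ω, f ω * exp (-β * (R0 n ω + ∑ α, E α * R n α ω)) ∂μ)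
    (S : κ → ι → Ω → ℝ) (hSmeas : ∀ n α, AEMeasurable (S n α) μ)
    (hRS : ∀ α, ∃ c : κ → ℝ, (∀ n ω, |R n α ω - 2 * S n α ω| ≤ c n) ∧
      Tendsto (fun n => c n / a n) l (nhds 0))
    (hR0small : ∃ c : κ → ℝ, (∀ n ω, |R0 n ω| ≤ c n) ∧ Tendsto (fun n => c n / a n) l (nhds 0))
    (lam : ι → ℝ) :
    Tendsto (fun n => -(1 / a n) * log (∫ ω, exp (-β * ∑ α, lam α * S n α ω) ∂μ) -
        -(1 / a n) * log (∫ ω, exp (-β * ∑ α, (2 * E α - lam α) * S n α ω) ∂μ))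
      l (nhds 0) := by
  let J (v : ι → ℝ) (n : κ) (ω : Ω) : ℝ := ∑ α, v α * S n α ω
  let V (n : κ) (ω : Ω) : ℝ := ∑ α, lam α / 2 * R n α ω
  let W (n : κ) (ω : Ω) : ℝ := R0 n ω + ∑ α, E α * R n α ω
  have hJmeas (v : ι → ℝ) (n : κ) : AEMeasurable (J v n) μ := by fun_prop
  have hsymm (n : κ) : mgf (fun ω => W n ω - V n ω) μ (-β) = mgf (V n) μ (-β) :=
    mgf_sub_sum_mul_eq_mgf_sum_mul (hRmeas n) (hRbdd n) (hRanti n) (hGibbs n) _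
  have hVint (n : κ) : Integrable (fun ω => exp (-β * V n ω)) μ :=
    integrable_exp_mul_sum_mul (fun α => (hRmeas n α).aemeasurable) (hRbdd n) _ _
  -- A non-integrable exponential would have Bochner integral `0`, not the positive `mgf (V n)`.
  have hWVint (n : κ) : Integrable (fun ω => exp (-β * (W n ω - V n ω))) μ :=
    mgf_pos_iff.1 (hsymm n ▸ mgf_pos_iff.2 (hVint n))
  have hJR := isLittleO_sum_mul_sub_sum_half_mul fun α =>
    isLittleO_prod_top_of_forall_abs_le ha (hRS α)
  have hJV := isLittleO_cgf_sub_cgf (hJmeas lam) hVint (hJR lam)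
  have hJWV := isLittleO_cgf_sub_cgf (hJmeas fun α => 2 * E α - lam α) hWVint <|
    ((hJR fun α => 2 * E α - lam α).sub
      (isLittleO_prod_top_of_forall_abs_le ha hR0small)).congr_left fun p => by
        simp only [J, V, W, sub_div, sub_mul, Finset.sum_sub_distrib,
          mul_div_cancel_left₀ _ (two_ne_zero (α := ℝ))]
        ring
  have hfree : Tendsto (fun n => -((cgf (J lam n) μ (-β) -
      cgf (J (fun α => 2 * E α - lam α) n) μ (-β)) / a n)) l (nhds 0) := by
    rw [← neg_zero]
    refine ((hJV.sub hJWV).congr_left fun n => ?_).tendsto_div_nhds_zero.neg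
    simp only [cgf, hsymm, sub_sub_sub_cancel_right]
  refine hfree.congr fun n => ?_
  simp only [cgf, mgf, J]
  ring

end FluctuationTheorem

/-- Abstract form of Theorem 1 of the paper (fluctuation theorem for Gibbs states,
`p(λ,E) = p(2E−λ,E)`): given a sequence of involutive symmetries `T n` with antisymmetric
relative energies `R0 n, R n α` for which the Gibbs change-of-variables identity holds,
and current sums `S n α` approximating `R n α / 2` up to `o(a n)` boundary terms, if the
two free-energy limits `p(λ)` and `p(2E−λ)` exist then they are equal. -/
theorem fluctuation_theorem_for_gibbs_states
    {Ω : Type*} [MeasurableSpace Ω] (μ : Measure Ω) [IsProbabilityMeasure μ]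
    (β : ℝ) (m : ℕ) (hm : 1 ≤ m) (E : Fin m → ℝ)
    (a : ℕ → ℝ) (ha : ∀ n, 0 < a n) (haTop : Tendsto a atTop atTop)
    (T : ℕ → Ω → Ω) (hTmeas : ∀ n, Measurable (T n)) (hTinv : ∀ n, T n ∘ T n = id)
    (R0 : ℕ → Ω → ℝ) (hR0meas : ∀ n, Measurable (R0 n))
    (hR0bdd : ∀ n, ∃ C : ℝ, ∀ ω, |R0 n ω| ≤ C)
    (hR0anti : ∀ n, R0 n ∘ T n = fun ω => - R0 n ω)
    (R : ℕ → Fin m → Ω → ℝ) (hRmeas : ∀ n α, Measurable (R n α))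
    (hRbdd : ∀ n α, ∃ C : ℝ, ∀ ω, |R n α ω| ≤ C)
    (hRanti : ∀ n α, R n α ∘ T n = fun ω => - R n α ω)
    (hGibbs : ∀ n, ∀ f : Ω → ℝ, Measurable f → (∃ C : ℝ, ∀ ω, |f ω| ≤ C) →
      ∫ ω, f (T n ω) ∂μ =
        ∫ ω, f ω * Real.exp (-β * (R0 n ω + ∑ α, E α * R n α ω)) ∂μ)
    (S : ℕ → Fin m → Ω → ℝ) (hSmeas : ∀ n α, Measurable (S n α))
    (hSbdd : ∀ n α, ∃ C : ℝ, ∀ ω, |S n α ω| ≤ C)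
    (hRS : ∀ α, ∃ c : ℕ → ℝ, (∀ n ω, |R n α ω - 2 * S n α ω| ≤ c n) ∧
      Tendsto (fun n => c n / a n) atTop (nhds 0))
    (hR0small : ∃ c : ℕ → ℝ, (∀ n ω, |R0 n ω| ≤ c n) ∧
      Tendsto (fun n => c n / a n) atTop (nhds 0))
    (lam : Fin m → ℝ) (plam p2Elam : ℝ)
    (hplam : Tendsto
      (fun n => - (1 / a n) *
        Real.log (∫ ω, Real.exp (-β * ∑ α, lam α * S n α ω) ∂μ))
      atTop (nhds plam))
    (hp2Elam : Tendsto
      (fun n => - (1 / a n) *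
        Real.log (∫ ω, Real.exp (-β * ∑ α, (2 * E α - lam α) * S n α ω) ∂μ))
      atTop (nhds p2Elam)) :
    plam = p2Elam := by
  exact sub_eq_zero.1 (tendsto_nhds_unique (hplam.sub hp2Elam)
    (fluctuation_theorem_for_gibbs_states_general μ β E a (fun n => (ha n).ne') T R0 R hRmeas hRbdd
      hRanti hGibbs S (fun n α => (hSmeas n α).aemeasurable) hRS hR0small lam))
end

section
/- Let p : ℝ → ℝ satisfy p(λ) = p(1 − λ) for all λ ∈ ℝ, and define i : ℝ → ℝ ∪ {+∞} by i(w) = sup_{λ ∈ ℝ} (p(λ) − λ w). Then for every w ∈ ℝ, i(w) + w = i(−w) (an equality of extended real numbers), i.e. i(w) − i(−w) = −w whenever both values are finite. -/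
theorem ereal_iSup_add_coe {ι : Sort*} (f : ι → EReal) (c : ℝ) :
    (⨆ i, f i) + (c : EReal) = ⨆ i, (f i + c) :=
  have translation_adjunction : GaloisConnection (· + (c : EReal)) (· - (c : EReal)) :=
    fun _ _ ↦ (EReal.le_sub_iff_add_le (.inl (EReal.coe_ne_bot c)) (.inl (EReal.coe_ne_top c))).symm
  translation_adjunction.l_iSup

/-- The Legendre transform `w ↦ sup_v (p(v) − w(v))` of `p`, with the sign convention of
large-deviation theory (free energy to rate function). The dual variable is an additive functional
`w`; the value `p v = ⊥` excludes `v` from the supremum. -/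
noncomputable def legendreTransform {V : Type*} [AddZeroClass V] (p : V → EReal) (w : V →+ ℝ) :
    EReal :=
  ⨆ v, p v - (w v : EReal)

section Reflection

variable {V : Type*} [AddGroup V]

theorem legendreTransform_comp_sub_left (p : V → EReal) (e : V) (w : V →+ ℝ) :
    legendreTransform (fun v ↦ p (e - v)) (-w) = legendreTransform p w + (w e : EReal) := by
  have summand_reflect (v : V) :
      p (e - v) - ((-w) v : ℝ) = p (e - v) - (w (e - v) : EReal) + (w e : EReal) := by
    have pairing_reflect : -(-w) v = -w (e - v) + w e := by
      rw [AddMonoidHom.neg_apply, map_sub]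
      ring
    calc
      p (e - v) - ((-w) v : ℝ)
        = p (e - v) + ((-w (e - v) + w e : ℝ) : EReal) := by
          rw [← pairing_reflect, EReal.coe_neg, sub_eq_add_neg (p (e - v))]
      _ = p (e - v) - (w (e - v) : EReal) + (w e : EReal) := by
          rw [EReal.coe_add, EReal.coe_neg, ← add_assoc, sub_eq_add_neg (p (e - v))]
  calc
    legendreTransform (fun v ↦ p (e - v)) (-w)
      = ⨆ v, (p (e - v) - (w (e - v) : EReal) + (w e : EReal)) := iSup_congr summand_reflect
    _ = ⨆ v, (p v - (w v : EReal) + (w e : EReal)) :=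
        (Equiv.subLeft e).iSup_comp (g := fun v ↦ p v - (w v : EReal) + (w e : EReal))
    _ = legendreTransform p w + (w e : EReal) := (ereal_iSup_add_coe _ _).symm

theorem legendre_transform_fluctuation_symmetry_one_dim_general
    (p : V → EReal) (e : V) (hsym : ∀ v, p v = p (e - v)) (w : V →+ ℝ) :
    legendreTransform p w + (w e : EReal) = legendreTransform p (-w) := by
  rw [← legendreTransform_comp_sub_left, ← funext hsym]

end Reflection

/-- Gallavotti–Cohen fluctuation-theorem symmetry (equation (cg) of the paper) in one
dimension: if `p : ℝ → ℝ` satisfies `p(λ) = p(1 − λ)`, then its Legendre transform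
`i(w) = sup_λ (p(λ) − λ w)` (with values in the extended reals) satisfies
`i(w) + w = i(−w)` for every `w`, i.e. `i(w) − i(−w) = −w` whenever both are finite. -/
theorem legendre_transform_fluctuation_symmetry_one_dim
    (p : ℝ → ℝ) (hsym : ∀ lam : ℝ, p lam = p (1 - lam)) :
    ∀ w : ℝ,
      (⨆ lam : ℝ, ((p lam - lam * w : ℝ) : EReal)) + (w : EReal) =
        ⨆ lam : ℝ, ((p lam - lam * (-w) : ℝ) : EReal) := by
  intro w
  simpa [legendreTransform, sub_eq_add_neg] using
    legendre_transform_fluctuation_symmetry_one_dim_general (fun lam ↦ (p lam : EReal)) 1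
      (fun lam ↦ congrArg _ (hsym lam)) (AddMonoidHom.mulRight w)
end

section
/- Let Ω be a finite nonempty set, H : Ω → ℝ, β > 0, and π : Ω → Ω a bijection with π ∘ π = id. Let μ be the Gibbs probability measure on Ω given by μ({σ}) = exp(−β H(σ)) / Z with Z = Σ_{σ∈Ω} exp(−β H(σ)), and let πμ denote the image (pushforward) of μ under π. Then the Kullback–Leibler divergences satisfy D(πμ ‖ μ) = D(μ ‖ πμ) = β · Σ_{σ∈Ω} μ({σ}) (H(π σ) − H(σ)) ≥ 0, and this quantity is strictly positive if and only if πμ ≠ μ. -/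
open scoped BigOperators

/-!
The Gibbs weights satisfy `log (μ σ / μ τ) = β (H τ - H σ)`, so averaging over `μ` turns relative
energy into relative entropy. A permutation `π` preserves the total mass, so `μ` and `μ ∘ π` may be
compared by Gibbs' inequality, which rests on the pointwise identity
`q * klFun (p / q) = p * log (p / q) + q - p` with `klFun` nonnegative and vanishing only at `1`.
-/

open InformationTheory

section RelEntropy

variable {ι κ : Type*} [Fintype ι] [Fintype κ] {p q : ι → ℝ}

/-- The Kullback–Leibler divergence `D(p ‖ q)` of two mass functions on a finite type. It is
real-valued, hence agrees with the usual divergence only when `p` vanishes wherever `q` does. -/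
noncomputable def relEntropy (p q : ι → ℝ) : ℝ :=
  ∑ i, p i * Real.log (p i / q i)

theorem relEntropy_comp_equiv (e : κ ≃ ι) (p q : ι → ℝ) :
    relEntropy (p ∘ e) (q ∘ e) = relEntropy p q :=
  e.sum_comp fun i => p i * Real.log (p i / q i)

theorem mul_klFun_div {a b : ℝ} (hab : b = 0 → a = 0) :
    b * klFun (a / b) = a * Real.log (a / b) + b - a := by
  rcases eq_or_ne b 0 with hb | hb
  · simp [hb, hab hb]
  · rw [klFun]
    field_simp

theorem relEntropy_eq_sum_mul_klFun (hpq : ∀ i, q i = 0 → p i = 0)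
    (hsum : ∑ i, p i = ∑ i, q i) :
    relEntropy p q = ∑ i, q i * klFun (p i / q i) := by
  simp only [mul_klFun_div (hpq _), Finset.sum_sub_distrib, Finset.sum_add_distrib, hsum,
    add_sub_cancel_right, relEntropy]

theorem mul_klFun_div_nonneg {a b : ℝ} (ha : 0 ≤ a) (hb : 0 ≤ b) : 0 ≤ b * klFun (a / b) :=
  mul_nonneg hb (klFun_nonneg (div_nonneg ha hb))

theorem mul_klFun_div_eq_zero_iff {a b : ℝ} (ha : 0 ≤ a) (hb : 0 ≤ b) (hab : b = 0 → a = 0) :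
    b * klFun (a / b) = 0 ↔ a = b := by
  rcases eq_or_ne b 0 with hb' | hb'
  · simp [hb', hab hb']
  · rw [mul_eq_zero_iff_left hb', klFun_eq_zero_iff (div_nonneg ha hb), div_eq_one_iff_eq hb']

theorem relEntropy_nonneg (hp : 0 ≤ p) (hq : 0 ≤ q) (hpq : ∀ i, q i = 0 → p i = 0)
    (hsum : ∑ i, p i = ∑ i, q i) : 0 ≤ relEntropy p q := by
  rw [relEntropy_eq_sum_mul_klFun hpq hsum]
  exact Finset.sum_nonneg fun i _ => mul_klFun_div_nonneg (hp i) (hq i)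

theorem relEntropy_eq_zero_iff (hp : 0 ≤ p) (hq : 0 ≤ q) (hpq : ∀ i, q i = 0 → p i = 0)
    (hsum : ∑ i, p i = ∑ i, q i) : relEntropy p q = 0 ↔ p = q := by
  rw [relEntropy_eq_sum_mul_klFun hpq hsum,
    Finset.sum_eq_zero_iff_of_nonneg fun i _ => mul_klFun_div_nonneg (hp i) (hq i), funext_iff]
  simp only [Finset.mem_univ, true_imp_iff, mul_klFun_div_eq_zero_iff (hp _) (hq _) (hpq _)]

theorem relEntropy_pos_iff (hp : 0 ≤ p) (hq : 0 ≤ q) (hpq : ∀ i, q i = 0 → p i = 0)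
    (hsum : ∑ i, p i = ∑ i, q i) : 0 < relEntropy p q ↔ p ≠ q :=
  (relEntropy_nonneg hp hq hpq hsum).lt_iff_ne'.trans (relEntropy_eq_zero_iff hp hq hpq hsum).not

end RelEntropy

section Gibbs

variable {Ω : Type*} [Fintype Ω]

/-- The mass function of the Gibbs measure with Hamiltonian `H` at inverse temperature `β`. -/
noncomputable def gibbsMass (H : Ω → ℝ) (β : ℝ) (σ : Ω) : ℝ :=
  Real.exp (-β * H σ) / ∑ τ, Real.exp (-β * H τ)

theorem gibbsMass_pos (H : Ω → ℝ) (β : ℝ) (σ : Ω) : 0 < gibbsMass H β σ :=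
  div_pos (Real.exp_pos _) (Finset.sum_pos (fun _ _ => Real.exp_pos _) ⟨σ, Finset.mem_univ σ⟩)

theorem log_gibbsMass_div_gibbsMass (H : Ω → ℝ) (β : ℝ) (σ τ : Ω) :
    Real.log (gibbsMass H β σ / gibbsMass H β τ) = β * (H τ - H σ) := by
  have partition_ne_zero : ∑ τ, Real.exp (-β * H τ) ≠ 0 :=
    (div_ne_zero_iff.mp (gibbsMass_pos H β σ).ne').2
  rw [gibbsMass, gibbsMass, div_div_div_cancel_right₀ partition_ne_zero, ← Real.exp_sub,
    Real.log_exp]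
  ring

theorem relEntropy_gibbsMass_comp (H : Ω → ℝ) (β : ℝ) (f : Ω → Ω) :
    relEntropy (gibbsMass H β) (gibbsMass H β ∘ f) =
      β * ∑ σ, gibbsMass H β σ * (H (f σ) - H σ) := by
  simp only [relEntropy, Function.comp_apply, log_gibbsMass_div_gibbsMass, Finset.mul_sum,
    mul_left_comm β]

/-- `gibbsMass H β ∘ π` is the mass function of the image of the Gibbs measure under `π⁻¹`, and
`gibbsMass H β ∘ π.symm` that of its image under `π`; the two coincide for an involution. -/
theorem gibbs_relative_entropy_mean_relative_energy_general (H : Ω → ℝ) (β : ℝ)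
    (π : Equiv.Perm Ω) :
    relEntropy (gibbsMass H β ∘ π) (gibbsMass H β) =
        relEntropy (gibbsMass H β) (gibbsMass H β ∘ π.symm) ∧
    relEntropy (gibbsMass H β) (gibbsMass H β ∘ π) =
        β * ∑ σ, gibbsMass H β σ * (H (π σ) - H σ) ∧
    0 ≤ β * ∑ σ, gibbsMass H β σ * (H (π σ) - H σ) ∧
    (0 < β * ∑ σ, gibbsMass H β σ * (H (π σ) - H σ) ↔ gibbsMass H β ∘ π ≠ gibbsMass H β) := by
  have mass_nonneg : 0 ≤ gibbsMass H β := fun σ => (gibbsMass_pos H β σ).le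
  have image_nonneg : 0 ≤ gibbsMass H β ∘ π := fun σ => mass_nonneg (π σ)
  have abs_cont : ∀ σ, (gibbsMass H β ∘ π) σ = 0 → gibbsMass H β σ = 0 :=
    fun σ h => absurd h (gibbsMass_pos H β (π σ)).ne'
  have sum_eq : ∑ σ, gibbsMass H β σ = ∑ σ, (gibbsMass H β ∘ π) σ :=
    (Equiv.sum_comp π (gibbsMass H β)).symm
  rw [← relEntropy_gibbsMass_comp]
  refine ⟨?_, rfl, relEntropy_nonneg mass_nonneg image_nonneg abs_cont sum_eq,
    (relEntropy_pos_iff mass_nonneg image_nonneg abs_cont sum_eq).trans ne_comm⟩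
  rw [← relEntropy_comp_equiv π (gibbsMass H β) (gibbsMass H β ∘ π.symm), Function.comp_assoc,
    Equiv.symm_comp_self, Function.comp_id]

end Gibbs

/-- Finite-volume analogue of Proposition 1 of the paper: for the Gibbs measure
`μ({σ}) = exp(−β H(σ))/Z` on a finite set and an involutive bijection `π`, the
Kullback–Leibler divergences between `μ` and its pushforward `πμ` (given by
`πμ({σ}) = μ({π σ})` since `π` is an involution) coincide, equal
`β · Σ_σ μ({σ}) (H(π σ) − H(σ))`, are nonnegative, and are strictly positive
if and only if `πμ ≠ μ`. -/
theorem gibbs_relative_entropy_mean_relative_energy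
    {Ω : Type*} [Fintype Ω] [Nonempty Ω]
    (H : Ω → ℝ) (β : ℝ) (hβ : 0 < β)
    (pi : Ω → Ω) (hbij : Function.Bijective pi) (hinv : pi ∘ pi = id)
    (μ : Ω → ℝ)
    (hμ : ∀ σ, μ σ = Real.exp (-β * H σ) / ∑ τ, Real.exp (-β * H τ)) :
    (∑ σ, μ (pi σ) * Real.log (μ (pi σ) / μ σ) =
        ∑ σ, μ σ * Real.log (μ σ / μ (pi σ))) ∧
    (∑ σ, μ σ * Real.log (μ σ / μ (pi σ)) =
        β * ∑ σ, μ σ * (H (pi σ) - H σ)) ∧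
    (0 ≤ β * ∑ σ, μ σ * (H (pi σ) - H σ)) ∧
    (0 < β * ∑ σ, μ σ * (H (pi σ) - H σ) ↔ (fun σ => μ (pi σ)) ≠ μ) := by
  obtain rfl : μ = gibbsMass H β := funext hμ
  exact gibbs_relative_entropy_mean_relative_energy_general H β
    (Function.Involutive.toPerm pi (congrFun hinv))
end

section
/- Let m ≥ 1 and let f : ℝ^m × ℝ^m → ℝ be twice continuously differentiable and satisfy f(λ, E) = f(2E − λ, E) for all λ, E ∈ ℝ^m. Then for all indices α, γ ∈ {1,…,m}, the mixed second partial derivatives at the origin satisfy ∂²f/∂E_γ ∂λ_α (0,0) = − ∂²f/∂λ_γ ∂λ_α (0,0). -/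
/-!
The symmetry says that `λ ↦ f(λ, E)` is even about `λ = E`, so `∂_λ f` vanishes on the diagonal
`{λ = E}`. Differentiating this along the diagonal gives `(∂_E + ∂_λ) ∂_λ f = 0` there; the
Green–Kubo relation is the value at the origin.
-/

open Filter Topology

section

variable {𝕜 V F : Type*} [NontriviallyNormedField 𝕜]
  [NormedAddCommGroup V] [NormedSpace 𝕜 V] [NormedAddCommGroup F] [NormedSpace 𝕜 F]

theorem hasDerivAt_zero_eq_zero_of_even [NeZero (2 : 𝕜)] {φ : 𝕜 → F} {φ' : F}
    (hφ : HasDerivAt φ φ' 0) (heven : ∀ᶠ t in 𝓝 0, φ t = φ (-t)) : φ' = 0 := by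
  have hreflected : HasDerivAt (fun t => φ (-t)) (-φ') 0 := by
    simpa [Function.comp_def] using hφ.scomp_of_eq 0 (hasDerivAt_neg 0) neg_zero.symm
  have hneg : φ' = -φ' := hφ.unique (hreflected.congr_of_eventuallyEq heven)
  have htwo : (2 : 𝕜) • φ' = 0 := by rw [two_smul, add_eq_zero_iff_eq_neg, ← hneg]
  exact (smul_eq_zero_iff_right two_ne_zero).mp htwo

theorem hasLineDerivAt_inl_eq_zero_of_slice_even [NeZero (2 : 𝕜)]
    {W : Type*} [AddCommGroup W] [Module 𝕜 W] {f : V × W → F} {d : F} {a u : V} {b : W}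
    (heven : ∀ᶠ x in 𝓝 a, f (x, b) = f ((2 : 𝕜) • a - x, b))
    (hd : HasLineDerivAt 𝕜 f d (a, b) (u, 0)) : d = 0 := by
  have hline : Tendsto (fun t : 𝕜 => a + t • u) (𝓝 0) (𝓝 a) :=
    Continuous.tendsto' (by fun_prop) 0 a (by simp)
  refine hasDerivAt_zero_eq_zero_of_even hd ?_
  filter_upwards [hline.eventually heven] with t ht
  have hreflect : (2 : 𝕜) • a - (a + t • u) = a + -t • u := by module
  simpa [hreflect] using ht

theorem hasFDerivAt_apply_inr_eq_neg_apply_inl_of_diag_eq_zero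
    {g : V × V → F} {g' : V × V →L[𝕜] F} {a : V} (hg : HasFDerivAt g g' (a, a))
    (hdiag : ∀ᶠ E in 𝓝 a, g (E, E) = 0) (w : V) : g' (0, w) = -g' (w, 0) := by
  have hcomp : HasFDerivAt (fun E => g (E, E)) (g' ∘L (.prod (.id 𝕜 V) (.id 𝕜 V))) a :=
    HasFDerivAt.comp (g := g) a hg ((hasFDerivAt_id a).prodMk (hasFDerivAt_id a))
  have hzero : HasFDerivAt (fun E => g (E, E)) (0 : V →L[𝕜] F) a :=
    (hasFDerivAt_const 0 a).congr_of_eventuallyEq hdiag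
  have hww : g' (w, w) = 0 := DFunLike.congr_fun (hcomp.unique hzero) w
  rw [← add_eq_zero_iff_eq_neg, ← map_add]
  simpa using hww

theorem green_kubo_from_fluctuation_symmetry_general [NeZero (2 : 𝕜)]
    {f g : V × V → F} {g' : V × V →L[𝕜] F} {a u : V}
    (hsym : ∀ᶠ x : V × V in 𝓝 (a, a), f x = f ((2 : 𝕜) • x.2 - x.1, x.2))
    (hg : ∀ᶠ x in 𝓝 (a, a), HasLineDerivAt 𝕜 f (g x) x (u, 0))
    (hg' : HasFDerivAt g g' (a, a)) (w : V) : g' (0, w) = -g' (w, 0) := by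
  have hdiag : Tendsto (fun E : V => (E, E)) (𝓝 a) (𝓝 (a, a)) :=
    (continuous_id.prodMk continuous_id).tendsto a
  refine hasFDerivAt_apply_inr_eq_neg_apply_inl_of_diag_eq_zero hg' ?_ w
  filter_upwards [hdiag.eventually hsym.eventually_nhds, hdiag.eventually hg] with E hsymE hgE
  have hslice : Tendsto (fun lam : V => (lam, E)) (𝓝 E) (𝓝 (E, E)) :=
    (continuous_id.prodMk continuous_const).tendsto E
  exact hasLineDerivAt_inl_eq_zero_of_slice_even (hslice.eventually hsymE) hgE

theorem differentiable_fderiv_apply_of_contDiff_two {f : V → F} (hf : ContDiff 𝕜 2 f) (v : V) :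
    Differentiable 𝕜 fun x => fderiv 𝕜 f x v :=
  ((hf.fderiv_right one_add_one_eq_two.le).differentiable one_ne_zero).clm_apply
    (differentiable_const v)

end

/-- Green–Kubo relation (Section 2.4 of the paper): if `f(λ, E)` is `C²` and satisfies
the fluctuation symmetry `f(λ, E) = f(2E − λ, E)`, then the mixed second partial
derivatives at the origin satisfy
`∂²f/∂E_γ ∂λ_α (0,0) = − ∂²f/∂λ_γ ∂λ_α (0,0)`. Partial derivatives are expressed via
the Fréchet derivative in the coordinate directions `(Pi.single α 1, 0)` (a `λ`
direction) and `(0, Pi.single γ 1)` (an `E` direction). -/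
theorem green_kubo_from_fluctuation_symmetry
    (m : ℕ) (hm : 1 ≤ m)
    (f : (Fin m → ℝ) × (Fin m → ℝ) → ℝ)
    (hf : ContDiff ℝ 2 f)
    (hsym : ∀ lam E : Fin m → ℝ, f (lam, E) = f (fun α => 2 * E α - lam α, E)) :
    ∀ α γ : Fin m,
      fderiv ℝ (fun x : (Fin m → ℝ) × (Fin m → ℝ) =>
          fderiv ℝ f x (Pi.single α 1, 0)) 0 (0, Pi.single γ 1) =
        - fderiv ℝ (fun x : (Fin m → ℝ) × (Fin m → ℝ) =>
            fderiv ℝ f x (Pi.single α 1, 0)) 0 (Pi.single γ 1, 0) := by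
  intro α γ
  exact green_kubo_from_fluctuation_symmetry_general (𝕜 := ℝ)
    (Eventually.of_forall fun x => hsym x.1 x.2)
    (Eventually.of_forall fun x =>
      (hf.differentiable two_ne_zero x).hasFDerivAt.hasLineDerivAt (Pi.single α 1, 0))
    (differentiable_fderiv_apply_of_contDiff_two hf _ 0).hasFDerivAt (Pi.single γ 1)
end

section
/- Let m ≥ 1 and let f : ℝ^m × ℝ^m → ℝ be twice continuously differentiable and satisfy f(λ, E) = f(2E − λ, E) for all λ, E ∈ ℝ^m. Then the response matrix M defined by M_{αγ} = ∂²f/∂E_γ ∂λ_α (0,0) is symmetric: M_{αγ} = M_{γα} for all α, γ ∈ {1,…,m}. -/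
/-!
The reflection `R (λ, E) = (2E - λ, E)` is a linear involution that fixes the diagonal vectors
`(b, b)` and negates the vectors `(a, 0)`. If `f ∘ R = f`, the Hessian of `f` at a fixed point
of `R` is `R`-invariant, so it vanishes on every pair `(b, b), (a, 0)`. Writing
`(0, b) = (b, b) - (b, 0)`, the response coefficient `∂²f/∂E_b ∂λ_a` equals `-∂²f/∂λ_b ∂λ_a`,
which is symmetric in `a` and `b`.
-/

open Filter
open scoped Topology

section InvariantHessian

variable {𝕜 V F : Type*} [NontriviallyNormedField 𝕜]
  [NormedAddCommGroup V] [NormedSpace 𝕜 V] [NormedAddCommGroup F] [NormedSpace 𝕜 F]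
  {f : V → F} {x : V}

theorem fderiv_fderiv_apply_const (hf : DifferentiableAt 𝕜 (fderiv 𝕜 f) x) (u v : V) :
    fderiv 𝕜 (fun y => fderiv 𝕜 f y v) x u = fderiv 𝕜 (fderiv 𝕜 f) x u v := by
  simp [fderiv_clm_apply hf (differentiableAt_const v)]

theorem iteratedFDeriv_map_of_comp_eventuallyEq {L : V ≃L[𝕜] V}
    (hf : f ∘ L =ᶠ[𝓝 x] f) (n : ℕ) (v : Fin n → V) :
    iteratedFDeriv 𝕜 n f (L x) (fun i => L (v i)) = iteratedFDeriv 𝕜 n f x v := by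
  have chain : iteratedFDeriv 𝕜 n (f ∘ L) x =
      (iteratedFDeriv 𝕜 n f (L x)).compContinuousLinearMap fun _ => (L : V →L[𝕜] V) := by
    simpa only [Set.preimage_univ, iteratedFDerivWithin_univ] using
      L.iteratedFDerivWithin_comp_right f uniqueDiffOn_univ (Set.mem_univ (L x)) n
  calc iteratedFDeriv 𝕜 n f (L x) (fun i => L (v i))
      = iteratedFDeriv 𝕜 n (f ∘ L) x v := by rw [chain]; rfl
    _ = iteratedFDeriv 𝕜 n f x v := by rw [(hf.iteratedFDeriv 𝕜 n).eq_of_nhds]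

theorem fderiv_fderiv_eq_zero_of_map_eq_self_of_map_eq_neg [NeZero (2 : 𝕜)] {L : V ≃L[𝕜] V}
    (hx : L x = x) (hf : f ∘ L =ᶠ[𝓝 x] f) {u v : V} (hu : L u = u) (hv : L v = -v) :
    fderiv 𝕜 (fderiv 𝕜 f) x u v = 0 := by
  have invariant : -fderiv 𝕜 (fderiv 𝕜 f) x u v = fderiv 𝕜 (fderiv 𝕜 f) x u v := by
    simpa [iteratedFDeriv_two_apply, hx, hu, hv] using
      iteratedFDeriv_map_of_comp_eventuallyEq hf 2 ![u, v]
  have double_eq_zero : (2 : 𝕜) • fderiv 𝕜 (fderiv 𝕜 f) x u v = 0 := by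
    rw [two_smul, ← neg_eq_iff_add_eq_zero, invariant]
  exact (smul_eq_zero.mp double_eq_zero).resolve_left two_ne_zero

end InvariantHessian

section FluctuationSymmetry

variable {𝕜 V F : Type*} [NontriviallyNormedField 𝕜]
  [NormedAddCommGroup V] [NormedSpace 𝕜 V] [NormedAddCommGroup F] [NormedSpace 𝕜 F]

variable (𝕜 V) in
/-- The reflection `(λ, E) ↦ (2E - λ, E)` underlying the fluctuation symmetry, as a continuous
linear automorphism. -/
def fluctuationReflection : (V × V) ≃L[𝕜] V × V :=
  let R : V × V →L[𝕜] V × V :=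
    ((2 : 𝕜) • ContinuousLinearMap.snd 𝕜 V V - ContinuousLinearMap.fst 𝕜 V V).prod
      (ContinuousLinearMap.snd 𝕜 V V)
  have involutive : Function.Involutive R := fun x => by simp [R]
  .equivOfInverse R R involutive.leftInverse involutive.rightInverse

@[simp]
theorem fluctuationReflection_apply (x : V × V) :
    fluctuationReflection 𝕜 V x = ((2 : 𝕜) • x.2 - x.1, x.2) :=
  rfl

theorem fluctuationReflection_diag (b : V) : fluctuationReflection 𝕜 V (b, b) = (b, b) := by
  simp [two_smul]

theorem fluctuationReflection_mk_zero (a : V) :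
    fluctuationReflection 𝕜 V (a, 0) = -(a, 0) := by
  simp

theorem fderiv_fderiv_zero_mk_eq_neg_of_fluctuation_symmetry [NeZero (2 : 𝕜)]
    {f : V × V → F} {p : V} (hsym : f ∘ fluctuationReflection 𝕜 V =ᶠ[𝓝 (p, p)] f) (a b : V) :
    fderiv 𝕜 (fderiv 𝕜 f) (p, p) (0, b) (a, 0) =
      -fderiv 𝕜 (fderiv 𝕜 f) (p, p) (b, 0) (a, 0) := by
  have vanish : fderiv 𝕜 (fderiv 𝕜 f) (p, p) (b, b) (a, 0) = 0 :=
    fderiv_fderiv_eq_zero_of_map_eq_self_of_map_eq_neg (fluctuationReflection_diag p) hsym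
      (fluctuationReflection_diag b) (fluctuationReflection_mk_zero a)
  have split : ((0, b) : V × V) = (b, b) - (b, 0) := by simp
  rw [split, map_sub, sub_apply, vanish, zero_sub]

theorem onsager_reciprocity_from_fluctuation_symmetry_general [NeZero (2 : 𝕜)]
    {f : V × V → F} {p : V} (hf : ContDiffAt 𝕜 (minSmoothness 𝕜 2) f (p, p))
    (hsym : ∀ᶠ x in 𝓝 (p, p), f x = f ((2 : 𝕜) • x.2 - x.1, x.2)) (a b : V) :
    fderiv 𝕜 (fun x => fderiv 𝕜 f x (a, 0)) (p, p) (0, b) =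
      fderiv 𝕜 (fun x => fderiv 𝕜 f x (b, 0)) (p, p) (0, a) := by
  have hdiff : DifferentiableAt 𝕜 (fderiv 𝕜 f) (p, p) :=
    ((hf.of_le le_minSmoothness).fderiv_right (m := 1) one_add_one_eq_two.le).differentiableAt
      one_ne_zero
  have hinv : f ∘ fluctuationReflection 𝕜 V =ᶠ[𝓝 (p, p)] f := EventuallyEq.symm hsym
  have hessian_symm : IsSymmSndFDerivAt 𝕜 f (p, p) := hf.isSymmSndFDerivAt le_rfl
  rw [fderiv_fderiv_apply_const hdiff, fderiv_fderiv_apply_const hdiff,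
    fderiv_fderiv_zero_mk_eq_neg_of_fluctuation_symmetry hinv,
    fderiv_fderiv_zero_mk_eq_neg_of_fluctuation_symmetry hinv, hessian_symm]

end FluctuationSymmetry

/-- Onsager reciprocity (Section 2.4 of the paper): if `f(λ, E)` is `C²` and satisfies
the fluctuation symmetry `f(λ, E) = f(2E − λ, E)`, then the response matrix
`M_{αγ} = ∂²f/∂E_γ ∂λ_α (0,0)` is symmetric. Partial derivatives are expressed via
the Fréchet derivative in the coordinate directions `(Pi.single α 1, 0)` (a `λ`
direction) and `(0, Pi.single γ 1)` (an `E` direction). -/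
theorem onsager_reciprocity_from_fluctuation_symmetry
    (m : ℕ) (hm : 1 ≤ m)
    (f : (Fin m → ℝ) × (Fin m → ℝ) → ℝ)
    (hf : ContDiff ℝ 2 f)
    (hsym : ∀ lam E : Fin m → ℝ, f (lam, E) = f (fun α => 2 * E α - lam α, E))
    (M : Fin m → Fin m → ℝ)
    (hM : ∀ α γ : Fin m,
      M α γ = fderiv ℝ (fun x : (Fin m → ℝ) × (Fin m → ℝ) =>
        fderiv ℝ f x (Pi.single α 1, 0)) 0 (0, Pi.single γ 1)) :
    ∀ α γ : Fin m, M α γ = M γ α := by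
  intro α γ
  rw [hM, hM]
  exact onsager_reciprocity_from_fluctuation_symmetry_general (p := 0)
    (by simpa using hf.contDiffAt) (.of_forall fun x => hsym x.1 x.2) _ _
end

section
/- Let μ be a probability measure on a measurable space Ω, let S, G : Ω → ℝ be bounded measurable functions, and let λ ∈ ℝ. If ∫ exp(−λ(S+G)) dμ = ∫ exp(−(1−λ)(S+G)) dμ, then |ln ∫ exp(−λ S) dμ − ln ∫ exp(−(1−λ) S) dμ| ≤ (|λ| + |1−λ|) · sup_{ω∈Ω} |G(ω)|. -/
open MeasureTheory Real

/-!
The log-partition function `f ↦ log ∫ exp f` is 1-Lipschitz for the sup-norm, so replacing `S + G`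
by `S` changes the cumulant generating function at `t` by at most `|t| * sup |G|`. Comparing at
`-lam` and at `-(1 - lam)`, where the cumulants of `S + G` agree, gives the bound.
-/

section LogPartition

variable {Ω : Type*} [MeasurableSpace Ω] {μ : Measure Ω} {f g : Ω → ℝ} {K : ℝ}

theorem integrable_exp_add_of_abs_le (hf : Integrable (fun ω ↦ exp (f ω)) μ)
    (hg : AEMeasurable g μ) (hgK : ∀ᵐ ω ∂μ, |g ω| ≤ K) :
    Integrable (fun ω ↦ exp (f ω + g ω)) μ := by
  simp only [exp_add]
  refine hf.mul_bdd (c := exp K) hg.exp.aestronglyMeasurable ?_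
  filter_upwards [hgK] with ω hω
  rw [norm_eq_abs, abs_exp, exp_le_exp]
  exact (le_abs_self _).trans hω

theorem integral_exp_le_exp_mul_integral_exp (hg : Integrable (fun ω ↦ exp (g ω)) μ)
    (hfg : ∀ᵐ ω ∂μ, f ω ≤ K + g ω) :
    ∫ ω, exp (f ω) ∂μ ≤ exp K * ∫ ω, exp (g ω) ∂μ := by
  rw [← integral_const_mul]
  refine integral_mono_of_nonneg (ae_of_all _ fun ω ↦ (exp_pos _).le) (hg.const_mul _) ?_
  filter_upwards [hfg] with ω hω
  rwa [← exp_add, exp_le_exp]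

theorem log_integral_exp_le_add [NeZero μ] (hf : Integrable (fun ω ↦ exp (f ω)) μ)
    (hg : Integrable (fun ω ↦ exp (g ω)) μ) (hfg : ∀ᵐ ω ∂μ, f ω ≤ K + g ω) :
    log (∫ ω, exp (f ω) ∂μ) ≤ K + log (∫ ω, exp (g ω) ∂μ) :=
  calc log (∫ ω, exp (f ω) ∂μ)
    _ ≤ log (exp K * ∫ ω, exp (g ω) ∂μ) :=
      log_le_log (integral_exp_pos hf) (integral_exp_le_exp_mul_integral_exp hg hfg)
    _ = K + log (∫ ω, exp (g ω) ∂μ) := by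
      rw [log_mul (exp_ne_zero K) (integral_exp_pos hg).ne', log_exp]

theorem abs_log_integral_exp_sub_le [NeZero μ] (hf : Integrable (fun ω ↦ exp (f ω)) μ)
    (hg : Integrable (fun ω ↦ exp (g ω)) μ) (hfg : ∀ᵐ ω ∂μ, |f ω - g ω| ≤ K) :
    |log (∫ ω, exp (f ω) ∂μ) - log (∫ ω, exp (g ω) ∂μ)| ≤ K := by
  have hle : ∀ᵐ ω ∂μ, f ω ≤ K + g ω :=
    hfg.mono fun ω hω ↦ sub_le_iff_le_add.mp (abs_le.mp hω).2
  have hge : ∀ᵐ ω ∂μ, g ω ≤ K + f ω :=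
    hfg.mono fun ω hω ↦ sub_le_iff_le_add.mp (abs_sub_le_iff.mp hω).2
  exact abs_sub_le_iff.mpr ⟨sub_le_iff_le_add.mpr (log_integral_exp_le_add hf hg hle),
    sub_le_iff_le_add.mpr (log_integral_exp_le_add hg hf hge)⟩

end LogPartition

section Cumulant

open ProbabilityTheory

variable {Ω : Type*} [MeasurableSpace Ω] {μ : Measure Ω} [NeZero μ]

theorem abs_cgf_add_sub_cgf_le {X Y : Ω → ℝ} {t K : ℝ}
    (hX : Integrable (fun ω ↦ exp (t * X ω)) μ) (hY : AEMeasurable Y μ)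
    (hYK : ∀ᵐ ω ∂μ, |Y ω| ≤ K) :
    |cgf (X + Y) μ t - cgf X μ t| ≤ |t| * K := by
  have htY : ∀ᵐ ω ∂μ, |t * Y ω| ≤ |t| * K := by
    filter_upwards [hYK] with ω hω
    rw [abs_mul]
    gcongr
  have hXY : Integrable (fun ω ↦ exp (t * (X + Y) ω)) μ := by
    simpa only [Pi.add_apply, mul_add] using
      integrable_exp_add_of_abs_le hX (hY.const_mul t) htY
  refine abs_log_integral_exp_sub_le hXY hX ?_
  simpa only [Pi.add_apply, mul_add, add_sub_cancel_left] using htY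

theorem local_fluctuation_symmetry_with_boundary_term_general {S G : Ω → ℝ} {s t K : ℝ}
    (hSs : Integrable (fun ω ↦ exp (s * S ω)) μ) (hSt : Integrable (fun ω ↦ exp (t * S ω)) μ)
    (hG : AEMeasurable G μ) (hGK : ∀ᵐ ω ∂μ, |G ω| ≤ K)
    (hGibbs : mgf (S + G) μ s = mgf (S + G) μ t) :
    |cgf S μ s - cgf S μ t| ≤ (|s| + |t|) * K := by
  have hcgf : cgf (S + G) μ s = cgf (S + G) μ t := congrArg log hGibbs
  calc |cgf S μ s - cgf S μ t|
    _ ≤ |cgf S μ s - cgf (S + G) μ s| + |cgf (S + G) μ s - cgf S μ t| := abs_sub_le _ _ _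
    _ = |cgf (S + G) μ s - cgf S μ s| + |cgf (S + G) μ t - cgf S μ t| := by
      rw [abs_sub_comm (cgf S μ s), hcgf]
    _ ≤ |s| * K + |t| * K :=
      add_le_add (abs_cgf_add_sub_cgf_le hSs hG hGK) (abs_cgf_add_sub_cgf_le hSt hG hGK)
    _ = (|s| + |t|) * K := (add_mul _ _ _).symm

end Cumulant

/-- Quantitative (local) form of the fluctuation symmetry used in Theorem 2 of the
paper: if the exact Gibbsian identity holds for the full relative energy `S + G`,
then the symmetry for `S` alone holds up to an error controlled by the sup-norm of
the boundary correction `G`: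
`|ln ∫ exp(−λS) dμ − ln ∫ exp(−(1−λ)S) dμ| ≤ (|λ| + |1−λ|) · sup_ω |G(ω)|`. -/
theorem local_fluctuation_symmetry_with_boundary_term
    {Ω : Type*} [MeasurableSpace Ω] (μ : Measure Ω) [IsProbabilityMeasure μ]
    (S G : Ω → ℝ) (hSmeas : Measurable S) (hGmeas : Measurable G)
    (hSbdd : ∃ C : ℝ, ∀ ω, |S ω| ≤ C) (hGbdd : ∃ C : ℝ, ∀ ω, |G ω| ≤ C)
    (lam : ℝ)
    (hGibbs : ∫ ω, Real.exp (-lam * (S ω + G ω)) ∂μ =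
      ∫ ω, Real.exp (-(1 - lam) * (S ω + G ω)) ∂μ) :
    |Real.log (∫ ω, Real.exp (-lam * S ω) ∂μ) -
        Real.log (∫ ω, Real.exp (-(1 - lam) * S ω) ∂μ)| ≤
      (|lam| + |1 - lam|) * ⨆ ω, |G ω| := by
  obtain ⟨C, hC⟩ := hSbdd
  obtain ⟨D, hD⟩ := hGbdd
  have hGsup : ∀ ω, |G ω| ≤ ⨆ ω, |G ω| := le_ciSup ⟨D, Set.forall_mem_range.mpr hD⟩
  have hSexp (t : ℝ) : Integrable (fun ω ↦ exp (t * S ω)) μ :=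
    ProbabilityTheory.integrable_exp_mul_of_mem_Icc hSmeas.aemeasurable
      (ae_of_all μ fun ω ↦ abs_le.mp (hC ω))
  rw [← abs_neg lam, ← abs_neg (1 - lam)]
  exact local_fluctuation_symmetry_with_boundary_term_general (hSexp _) (hSexp _)
    hGmeas.aemeasurable (ae_of_all μ hGsup) hGibbs
end

section
/- There exists a constant c, depending only on d and M, such that for all integers N ≥ L ≥ 1 and every space-time configuration σ : ℤ^d × ℤ → S, |R_{L,N}(σ) − Σ_{n=−N+1}^{N−1} Σ_{i : max_k |i_k| ≤ L−1} J_{i,n}(σ)| ≤ c · (N+1) · (L+1)^{d−1}. -/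
open scoped BigOperators

/-- The nearest-neighbour index set `B = {j ∈ ℤ^d : max_k |j_k| ≤ 1}`. -/
def Nbhd (d : ℕ) : Type := {j : Fin d → ℤ // ∀ k, |j k| ≤ 1}

/-- The transition weight `p_{i,n}(σ) = p(σ(i,n) | (σ(i+j, n−1))_{j∈B})` of a
translation-invariant nearest-neighbour PCA rule `p` at the space-time point `(i,n)`. -/
def pcaWeight {S : Type} (d : ℕ) (p : S → (Nbhd d → S) → ℝ)
    (σ : (Fin d → ℤ) → ℤ → S) (i : Fin d → ℤ) (n : ℤ) : ℝ :=
  p (σ i n) (fun j => σ (i + j.val) (n - 1))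

/-- The entropy-production current
`J_{i,n}(σ) = ln p(σ(i,n) | (σ(i+j,n−1))_j) − ln p(σ(i,n−1) | (σ(i+j,n))_j)`. -/
noncomputable def pcaCurrent {S : Type} (d : ℕ) (p : S → (Nbhd d → S) → ℝ)
    (σ : (Fin d → ℤ) → ℤ → S) (i : Fin d → ℤ) (n : ℤ) : ℝ :=
  Real.log (p (σ i n) (fun j => σ (i + j.val) (n - 1))) -
    Real.log (p (σ i (n - 1)) (fun j => σ (i + j.val) n))

/-- The time-reversal transformation `π_{L,N}` acting in the space-time window
`{(i,n) : max_k |i_k| ≤ L, |n| ≤ N}`. -/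
def timeRev {S : Type} (d : ℕ) (L N : ℕ) (σ : (Fin d → ℤ) → ℤ → S) :
    (Fin d → ℤ) → ℤ → S :=
  fun i n => if (∀ k, |i k| ≤ (L : ℤ)) ∧ |n| ≤ (N : ℤ) then σ i (-n) else σ i n

/-- The relative energy `R_{L,N}(σ) = Σ_{(i,n)} [ln p_{i,n}(σ) − ln p_{i,n}(π_{L,N}σ)]`,
summed over the finite window `max_k |i_k| ≤ L+1`, `−N ≤ n ≤ N+1` (outside of which the
terms vanish). -/
noncomputable def relEnergy {S : Type} (d : ℕ) (p : S → (Nbhd d → S) → ℝ) (L N : ℕ)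
    (σ : (Fin d → ℤ) → ℤ → S) : ℝ :=
  ∑ i ∈ Fintype.piFinset (fun _ : Fin d => Finset.Icc (-(L : ℤ) - 1) ((L : ℤ) + 1)),
    ∑ n ∈ Finset.Icc (-(N : ℤ)) ((N : ℤ) + 1),
      (Real.log (pcaWeight d p σ i n) - Real.log (pcaWeight d p (timeRev d L N σ) i n))

/-!
Away from the boundary of the reversed window, `π_{L,N}` turns `p_{i,1-n}` into the weight of
`σ(i,n-1)` given the configuration at time `n`, which is the backward weight in `J_{i,n}`. The time
reflection `n ↦ 1 - n` preserves `-N < n ≤ N`, so on the corresponding bulk box the relative energy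
and the current have the same sum. All remaining terms are at most `2M` in absolute value, and
there are `O(N L^{d-1})` of them: the spatial shell contributes `O(N L^{d-1})` and the last time
slices contribute `O(L^d)`.
-/

theorem abs_sum_sub_sum_le_card_sdiff_nsmul {ι G : Type*} [DecidableEq ι] [AddCommGroup G]
    [LinearOrder G] [IsOrderedAddMonoid G] {s t : Finset ι} {f : ι → G} {C : G} (hst : s ⊆ t)
    (hf : ∀ x ∈ t \ s, |f x| ≤ C) :
    |∑ x ∈ t, f x - ∑ x ∈ s, f x| ≤ (t \ s).card • C := by
  rw [← Finset.sum_sdiff_eq_sub hst]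
  exact (Finset.abs_sum_le_sum_abs _ _).trans (Finset.sum_le_card_nsmul _ _ _ hf)

theorem abs_sum_sub_sum_le_of_sum_eq {ι G : Type*} [DecidableEq ι] [AddCommGroup G]
    [LinearOrder G] [IsOrderedAddMonoid G] {s t u : Finset ι} {f g : ι → G} {C : G}
    (hst : s ⊆ t) (htu : t ⊆ u) (hfg : ∑ x ∈ t, f x = ∑ x ∈ t, g x)
    (hf : ∀ x ∈ u \ t, |f x| ≤ C) (hg : ∀ x ∈ t \ s, |g x| ≤ C) :
    |∑ x ∈ u, f x - ∑ x ∈ s, g x| ≤ (u \ s).card • C := by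
  have hcard : (u \ t).card + (t \ s).card = (u \ s).card := by
    have := Finset.card_sdiff_add_card_eq_card hst
    have := Finset.card_sdiff_add_card_eq_card htu
    have := Finset.card_sdiff_add_card_eq_card (hst.trans htu)
    omega
  calc |∑ x ∈ u, f x - ∑ x ∈ s, g x|
      = |(∑ x ∈ u, f x - ∑ x ∈ t, f x) + (∑ x ∈ t, g x - ∑ x ∈ s, g x)| := by
        rw [hfg, sub_add_sub_cancel]
    _ ≤ (u \ t).card • C + (t \ s).card • C :=
        (abs_add_le _ _).trans (add_le_add (abs_sum_sub_sum_le_card_sdiff_nsmul htu hf)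
          (abs_sum_sub_sum_le_card_sdiff_nsmul hst hg))
    _ = (u \ s).card • C := by rw [← add_nsmul, hcard]

theorem pow_sub_pow_le_sub_mul {R : Type*} [CommRing R] [LinearOrder R] [IsOrderedRing R]
    {a b : R} (hb : 0 ≤ b) (hba : b ≤ a) (n : ℕ) :
    a ^ n - b ^ n ≤ (a - b) * n * a ^ (n - 1) := by
  simpa only [abs_of_nonneg (sub_nonneg.2 hba), abs_of_nonneg (hb.trans hba), abs_of_nonneg hb,
    max_eq_left hba] using (le_abs_self _).trans (abs_pow_sub_pow_le a b n)

/-- The space-time window `max_k |i_k| ≤ L + 1`, `-N ≤ n ≤ N + 1` over which `relEnergy` is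
summed. -/
noncomputable def energyWindow (d L N : ℕ) : Finset ((Fin d → ℤ) × ℤ) :=
  Fintype.piFinset (fun _ => Finset.Icc (-(L : ℤ) - 1) (L + 1)) ×ˢ Finset.Icc (-(N : ℤ)) (N + 1)

/-- The space-time window `max_k |i_k| ≤ L - 1`, `-N < n ≤ N`, which is invariant under the
reflection `n ↦ 1 - n` of time. -/
noncomputable def reflectionWindow (d L N : ℕ) : Finset ((Fin d → ℤ) × ℤ) :=
  Fintype.piFinset (fun _ => Finset.Icc (-(L : ℤ) + 1) (L - 1)) ×ˢ Finset.Icc (-(N : ℤ) + 1) N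

/-- The space-time window `max_k |i_k| ≤ L - 1`, `-N < n < N` over which the currents are
summed. -/
noncomputable def currentWindow (d L N : ℕ) : Finset ((Fin d → ℤ) × ℤ) :=
  Fintype.piFinset (fun _ => Finset.Icc (-(L : ℤ) + 1) (L - 1)) ×ˢ
    Finset.Icc (-(N : ℤ) + 1) (N - 1)

theorem sum_currentWindow {G : Type*} [AddCommMonoid G] (d L N : ℕ) (f : (Fin d → ℤ) → ℤ → G) :
    ∑ x ∈ currentWindow d L N, f x.1 x.2 =
      ∑ n ∈ Finset.Icc (-(N : ℤ) + 1) (N - 1),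
        ∑ i ∈ Fintype.piFinset (fun _ : Fin d => Finset.Icc (-(L : ℤ) + 1) (L - 1)), f i n :=
  Finset.sum_product_right ..

theorem currentWindow_subset_reflectionWindow (d L N : ℕ) :
    currentWindow d L N ⊆ reflectionWindow d L N :=
  Finset.product_subset_product_right (Finset.Icc_subset_Icc le_rfl (by omega))

theorem reflectionWindow_subset_energyWindow (d L N : ℕ) :
    reflectionWindow d L N ⊆ energyWindow d L N :=
  Finset.product_subset_product
    (Fintype.piFinset_subset _ _ fun _ => Finset.Icc_subset_Icc (by omega) (by omega))
    (Finset.Icc_subset_Icc (by omega) (by omega))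

theorem card_energyWindow (d L N : ℕ) :
    (energyWindow d L N).card = (2 * L + 3) ^ d * (2 * N + 2) := by
  rw [energyWindow, Finset.card_product, Fintype.card_piFinset_const, Int.card_Icc, Int.card_Icc]
  congr 2 <;> omega

theorem card_currentWindow (d L N : ℕ) :
    (currentWindow d L N).card = (2 * L - 1) ^ d * (2 * N - 1) := by
  rw [currentWindow, Finset.card_product, Fintype.card_piFinset_const, Int.card_Icc, Int.card_Icc]
  congr 2 <;> omega

theorem card_energyWindow_sdiff_currentWindow_le (d L N : ℕ) :
    ((energyWindow d L N \ currentWindow d L N).card : ℝ) ≤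
      4 * d * (2 * L + 3) ^ (d - 1) * (2 * N + 2) + 3 * (2 * L + 3) ^ d := by
  rw [Finset.cast_card_sdiff ((currentWindow_subset_reflectionWindow d L N).trans
    (reflectionWindow_subset_energyWindow d L N)), card_energyWindow, card_currentWindow]
  push_cast
  set a : ℝ := 2 * L + 3
  set b : ℝ := ((2 * L - 1 : ℕ) : ℝ)
  set t : ℝ := 2 * N + 2
  set s : ℝ := ((2 * N - 1 : ℕ) : ℝ)
  have hb : 0 ≤ b := Nat.cast_nonneg _
  have hba : b ≤ a := by simp only [a, b]; exact_mod_cast (by omega : 2 * L - 1 ≤ 2 * L + 3)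
  have hab : a ≤ b + 4 := by simp only [a, b]; exact_mod_cast (by omega : 2 * L + 3 ≤ 2 * L - 1 + 4)
  have hts : t ≤ s + 3 := by simp only [t, s]; exact_mod_cast (by omega : 2 * N + 2 ≤ 2 * N - 1 + 3)
  have hshell : a ^ d - b ^ d ≤ 4 * d * a ^ (d - 1) :=
    (pow_sub_pow_le_sub_mul hb hba d).trans (by gcongr; linarith)
  calc a ^ d * t - b ^ d * s = (a ^ d - b ^ d) * t + b ^ d * (t - s) := by ring
    _ ≤ 4 * d * a ^ (d - 1) * t + b ^ d * 3 := by gcongr; linarith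
    _ ≤ 4 * d * a ^ (d - 1) * t + 3 * a ^ d := by rw [mul_comm (b ^ d)]; gcongr

theorem card_energyWindow_sdiff_currentWindow_le_max {d : ℕ} (hd : 1 ≤ d) (L N : ℕ) :
    ((energyWindow d L N \ currentWindow d L N).card : ℝ) ≤
      (8 * d + 9) * 3 ^ (d - 1) * ((max L N : ℕ) + 1) * (L + 1) ^ (d - 1) := by
  have hL : (L : ℝ) ≤ (max L N : ℕ) := by exact_mod_cast le_max_left L N
  have hN : (N : ℝ) ≤ (max L N : ℕ) := by exact_mod_cast le_max_right L N
  calc _ ≤ (4 * d * (2 * L + 3) ^ (d - 1) * (2 * N + 2) + 3 * (2 * L + 3) ^ d : ℝ) :=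
        card_energyWindow_sdiff_currentWindow_le d L N
    _ = (4 * d * (2 * N + 2) + 3 * (2 * L + 3)) * (2 * L + 3) ^ (d - 1) := by
        rw [← pow_sub_one_mul (Nat.one_le_iff_ne_zero.1 hd)]; ring
    _ ≤ (4 * d * (2 * ((max L N : ℕ) + 1)) + 3 * (3 * ((max L N : ℕ) + 1))) *
          (3 * (L + 1)) ^ (d - 1) := by gcongr <;> linarith
    _ = _ := by rw [mul_pow]; ring

section Energy

/-- The contribution `ln p_{i,n}(σ) - ln p_{i,n}(π_{L,N}σ)` of the space-time point `(i, n)` to the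
relative energy. -/
noncomputable def localRelEnergy {S : Type} (d : ℕ) (p : S → (Nbhd d → S) → ℝ) (L N : ℕ)
    (σ : (Fin d → ℤ) → ℤ → S) (i : Fin d → ℤ) (n : ℤ) : ℝ :=
  Real.log (pcaWeight d p σ i n) - Real.log (pcaWeight d p (timeRev d L N σ) i n)

variable {S : Type} {d : ℕ} (p : S → (Nbhd d → S) → ℝ) {M : ℝ} {L N : ℕ}
  (σ : (Fin d → ℤ) → ℤ → S)

theorem relEnergy_eq_sum_energyWindow :
    relEnergy d p L N σ = ∑ x ∈ energyWindow d L N, localRelEnergy d p L N σ x.1 x.2 := by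
  rw [energyWindow, Finset.sum_product]
  rfl

theorem timeRev_apply_of_abs_le {i : Fin d → ℤ} {n : ℤ} (hi : ∀ k, |i k| ≤ (L : ℤ))
    (hn : |n| ≤ (N : ℤ)) : timeRev d L N σ i n = σ i (-n) :=
  if_pos ⟨hi, hn⟩

theorem pcaWeight_timeRev_one_sub {i : Fin d → ℤ} {n : ℤ} (hi : ∀ k, |i k| + 1 ≤ (L : ℤ))
    (hn : -(N : ℤ) < n) (hn' : n ≤ N) :
    pcaWeight d p (timeRev d L N σ) i (1 - n) = p (σ i (n - 1)) (fun j => σ (i + j.val) n) := by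
  have hij (j : Nbhd d) (k : Fin d) : |(i + j.val) k| ≤ (L : ℤ) :=
    (abs_add_le _ _).trans ((add_le_add_right (j.property k) _).trans (hi k))
  rw [pcaWeight, timeRev_apply_of_abs_le σ (fun k => by have := hi k; omega)
    (abs_le.2 ⟨by omega, by omega⟩), neg_sub]
  congr 1
  funext j
  rw [timeRev_apply_of_abs_le σ (hij j) (abs_le.2 ⟨by omega, by omega⟩)]
  congr 1
  ring

theorem pcaCurrent_eq_log_sub_log_timeRev {i : Fin d → ℤ} {n : ℤ}
    (hi : ∀ k, |i k| + 1 ≤ (L : ℤ)) (hn : -(N : ℤ) < n) (hn' : n ≤ N) :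
    pcaCurrent d p σ i n =
      Real.log (pcaWeight d p σ i n) -
        Real.log (pcaWeight d p (timeRev d L N σ) i (1 - n)) := by
  rw [pcaWeight_timeRev_one_sub p σ hi hn hn', pcaCurrent, pcaWeight]

theorem sum_Icc_localRelEnergy_eq_sum_pcaCurrent {i : Fin d → ℤ}
    (hi : ∀ k, |i k| + 1 ≤ (L : ℤ)) :
    ∑ n ∈ Finset.Icc (-(N : ℤ) + 1) N, localRelEnergy d p L N σ i n =
      ∑ n ∈ Finset.Icc (-(N : ℤ) + 1) N, pcaCurrent d p σ i n := by
  have hreflect : ∑ n ∈ Finset.Icc (-(N : ℤ) + 1) N,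
        Real.log (pcaWeight d p (timeRev d L N σ) i (1 - n)) =
      ∑ n ∈ Finset.Icc (-(N : ℤ) + 1) N, Real.log (pcaWeight d p (timeRev d L N σ) i n) :=
    Finset.sum_equiv (Equiv.subLeft 1)
      (fun n => by simp only [Finset.mem_Icc, Equiv.subLeft_apply]; omega) (fun _ _ => rfl)
  have hcurrent (n : ℤ) (hn : n ∈ Finset.Icc (-(N : ℤ) + 1) N) :=
    pcaCurrent_eq_log_sub_log_timeRev p σ hi (Finset.mem_Icc.1 hn).1 (Finset.mem_Icc.1 hn).2
  rw [Finset.sum_congr rfl hcurrent, Finset.sum_sub_distrib, hreflect, ← Finset.sum_sub_distrib]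
  rfl

theorem sum_reflectionWindow_localRelEnergy_eq_sum_pcaCurrent :
    ∑ x ∈ reflectionWindow d L N, localRelEnergy d p L N σ x.1 x.2 =
      ∑ x ∈ reflectionWindow d L N, pcaCurrent d p σ x.1 x.2 := by
  simp only [reflectionWindow, Finset.sum_product]
  refine Finset.sum_congr rfl fun i hi => sum_Icc_localRelEnergy_eq_sum_pcaCurrent p σ fun k => ?_
  have := Finset.mem_Icc.1 (Fintype.mem_piFinset.1 hi k)
  exact le_sub_iff_add_le.1 (abs_le.2 ⟨by omega, by omega⟩)

variable {p}

theorem abs_localRelEnergy_le (hM : ∀ a η, |Real.log (p a η)| ≤ M) (i : Fin d → ℤ) (n : ℤ) :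
    |localRelEnergy d p L N σ i n| ≤ 2 * M :=
  (abs_sub _ _).trans ((add_le_add (hM _ _) (hM _ _)).trans_eq (two_mul M).symm)

theorem abs_pcaCurrent_le (hM : ∀ a η, |Real.log (p a η)| ≤ M) (i : Fin d → ℤ) (n : ℤ) :
    |pcaCurrent d p σ i n| ≤ 2 * M :=
  (abs_sub _ _).trans ((add_le_add (hM _ _) (hM _ _)).trans_eq (two_mul M).symm)

theorem abs_relEnergy_sub_sum_pcaCurrent_le_card (hM : ∀ a η, |Real.log (p a η)| ≤ M) :
    |relEnergy d p L N σ - ∑ x ∈ currentWindow d L N, pcaCurrent d p σ x.1 x.2| ≤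
      (energyWindow d L N \ currentWindow d L N).card * (2 * M) := by
  rw [relEnergy_eq_sum_energyWindow, ← nsmul_eq_mul]
  exact abs_sum_sub_sum_le_of_sum_eq (currentWindow_subset_reflectionWindow d L N)
    (reflectionWindow_subset_energyWindow d L N)
    (sum_reflectionWindow_localRelEnergy_eq_sum_pcaCurrent p σ)
    (fun x _ => abs_localRelEnergy_le σ hM x.1 x.2) (fun x _ => abs_pcaCurrent_le σ hM x.1 x.2)

end Energy

theorem pca_relative_energy_current_decomposition_general (d : ℕ) (hd : 1 ≤ d) (M : ℝ) :
    ∃ c : ℝ, ∀ (S : Type) (p : S → (Nbhd d → S) → ℝ),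
      (∀ a η, 0 < p a η) → (∀ a η, |Real.log (p a η)| ≤ M) →
      ∀ (L N : ℕ) (σ : (Fin d → ℤ) → ℤ → S),
        |relEnergy d p L N σ -
            ∑ n ∈ Finset.Icc (-(N : ℤ) + 1) ((N : ℤ) - 1),
              ∑ i ∈ Fintype.piFinset
                  (fun _ : Fin d => Finset.Icc (-(L : ℤ) + 1) ((L : ℤ) - 1)),
                pcaCurrent d p σ i n| ≤
          c * (((max L N : ℕ) : ℝ) + 1) * ((L : ℝ) + 1) ^ (d - 1) := by
  refine ⟨2 * M * ((8 * d + 9) * 3 ^ (d - 1)), fun S p _ hM L N σ => ?_⟩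
  have hM_nonneg : 0 ≤ M := (abs_nonneg _).trans (hM (σ 0 0) fun _ => σ 0 0)
  rw [← sum_currentWindow]
  calc _ ≤ (energyWindow d L N \ currentWindow d L N).card * (2 * M) :=
        abs_relEnergy_sub_sum_pcaCurrent_le_card σ hM
    _ ≤ (8 * d + 9) * 3 ^ (d - 1) * ((max L N : ℕ) + 1) * (L + 1) ^ (d - 1) * (2 * M) := by
        gcongr; exact card_energyWindow_sdiff_currentWindow_le_max hd L N
    _ = _ := by ring

/-- Equations (es1)–(es2) of the paper, the key estimate in the proof of Theorem 2
(fluctuation theorem for PCA): there is a constant `c`, depending only on `d` and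
`M = max |ln p(a|η)|`, such that for all `N ≥ L ≥ 1` and every space-time configuration
`σ`, the relative energy `R_{L,N}(σ)` differs from the bulk sum of the
entropy-production currents `Σ_{n=−N+1}^{N−1} Σ_{max_k |i_k| ≤ L−1} J_{i,n}(σ)` by at
most `c (N+1)(L+1)^{d−1}`. -/
theorem pca_relative_energy_current_decomposition (d : ℕ) (hd : 1 ≤ d) (M : ℝ) :
    ∃ c : ℝ, ∀ (S : Type) [Fintype S] [Nonempty S]
      (p : S → (Nbhd d → S) → ℝ),
      (∀ a η, 0 < p a η) → (∀ η, ∑ a, p a η = 1) →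
      (∀ a η, |Real.log (p a η)| ≤ M) →
      ∀ (L N : ℕ), 1 ≤ L → L ≤ N →
      ∀ σ : (Fin d → ℤ) → ℤ → S,
        |relEnergy d p L N σ -
            ∑ n ∈ Finset.Icc (-(N : ℤ) + 1) ((N : ℤ) - 1),
              ∑ i ∈ Fintype.piFinset
                  (fun _ : Fin d => Finset.Icc (-(L : ℤ) + 1) ((L : ℤ) - 1)),
                pcaCurrent d p σ i n| ≤
          c * ((N : ℝ) + 1) * ((L : ℝ) + 1) ^ (d - 1) := by
  obtain ⟨c, hc⟩ := pca_relative_energy_current_decomposition_general d hd M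
  exact ⟨c, fun S _ _ p hp _ hM L N _ hLN σ => by
    simpa only [max_eq_right hLN] using hc S p hp hM L N σ⟩
end

section
/- For an integer N ≥ 1, let P_N be the probability measure on S^{N+1} given by P_N(x_0,…,x_N) = ρ(x_0) · Π_{k=0}^{N−1} p(x_{k+1}|x_k), and define W_N(x_0,…,x_N) = ln ρ(x_0) − ln ρ(x_N) + Σ_{k=0}^{N−1} [ln p(x_{k+1}|x_k) − ln p(x_k|x_{k+1})]. Then for every λ ∈ ℝ, Σ_{x ∈ S^{N+1}} P_N(x) exp(−λ W_N(x)) = Σ_{x ∈ S^{N+1}} P_N(x) exp(−(1−λ) W_N(x)). -/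
open scoped BigOperators

/-!
Time reversal permutes the paths, flips the sign of `W` and multiplies the weight of a path by
`exp (-W)`. Reindexing the left-hand sum by reversal therefore turns the exponent `-λ W` into
`λ W - W = -(1 - λ) W`.
-/

theorem sum_mul_exp_neg_mul_eq_of_bijective {X : Type*} [Fintype X] {σ : X → X}
    (hσ : Function.Bijective σ) {w W : X → ℝ} (hW : ∀ x, W (σ x) = -W x)
    (hw : ∀ x, w (σ x) = w x * Real.exp (-W x)) (lam : ℝ) :
    ∑ x, w x * Real.exp (-lam * W x) = ∑ x, w x * Real.exp (-(1 - lam) * W x) := by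
  have tilt (x : X) : w (σ x) * Real.exp (-lam * W (σ x)) =
      w x * Real.exp (-(1 - lam) * W x) := by
    rw [hw, hW, mul_assoc, ← Real.exp_add]
    ring_nf
  calc
    ∑ x, w x * Real.exp (-lam * W x) = ∑ x, w (σ x) * Real.exp (-lam * W (σ x)) :=
      (hσ.sum_comp fun x => w x * Real.exp (-lam * W x)).symm
    _ = ∑ x, w x * Real.exp (-(1 - lam) * W x) := Finset.sum_congr rfl fun x _ => tilt x

theorem mul_exp_neg_log_sub_log {a b : ℝ} (ha : 0 ≤ a) (hb : 0 ≤ b) (hab : a = 0 ↔ b = 0) :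
    a * Real.exp (-(Real.log a - Real.log b)) = b := by
  rcases ha.eq_or_lt' with ha₀ | ha_pos
  · rw [ha₀, zero_mul, hab.mp ha₀]
  · have hb_pos : 0 < b := hb.lt_of_ne' (mt hab.mpr ha_pos.ne')
    rw [neg_sub, Real.exp_sub, Real.exp_log ha_pos, Real.exp_log hb_pos,
      mul_div_cancel₀ _ ha_pos.ne']

section Path

variable {S : Type*} (p : S → S → ℝ) (ρ : S → ℝ) {N : ℕ}

/-- The weight `P_N` of a path with initial weights `ρ` and transition weights `p`, where `p a b` is
the weight of the step from `b` to `a`. For a Markov chain this is the probability of the path. -/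
def pathWeight (x : Fin (N + 1) → S) : ℝ :=
  ρ (x 0) * ∏ k : Fin N, p (x k.succ) (x k.castSucc)

/-- The entropy production `W` of a path, the logarithm of the ratio of its weight to that of its
time reversal, expanded over the steps. If some transition weight along the path or its reversal
vanishes, the convention `Real.log 0 = 0` enters the value. -/
noncomputable def entropyProduction (x : Fin (N + 1) → S) : ℝ :=
  Real.log (ρ (x 0)) - Real.log (ρ (x (Fin.last N))) +
    ∑ k : Fin N,
      (Real.log (p (x k.succ) (x k.castSucc)) - Real.log (p (x k.castSucc) (x k.succ)))

theorem pathWeight_comp_rev (x : Fin (N + 1) → S) :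
    pathWeight p ρ (x ∘ Fin.rev) =
      ρ (x (Fin.last N)) * ∏ k : Fin N, p (x k.castSucc) (x k.succ) := by
  simp only [pathWeight, Function.comp_apply, Fin.rev_zero, Fin.rev_succ, Fin.rev_castSucc]
  rw [Fin.rev_bijective.prod_comp fun k : Fin N => p (x k.castSucc) (x k.succ)]

theorem entropyProduction_comp_rev (x : Fin (N + 1) → S) :
    entropyProduction p ρ (x ∘ Fin.rev) = -entropyProduction p ρ x := by
  simp only [entropyProduction, Function.comp_apply, Fin.rev_zero, Fin.rev_last, Fin.rev_succ,
    Fin.rev_castSucc]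
  rw [Fin.rev_bijective.sum_comp fun k : Fin N =>
      Real.log (p (x k.castSucc) (x k.succ)) - Real.log (p (x k.succ) (x k.castSucc)),
    neg_add, neg_sub, ← Finset.sum_neg_distrib]
  simp only [neg_sub]

variable {p ρ}

theorem pathWeight_comp_rev_eq_mul_exp (hp : ∀ a b, 0 ≤ p a b)
    (hrev : ∀ a b, p a b = 0 → p b a = 0) (hρ : ∀ a, 0 < ρ a) (x : Fin (N + 1) → S) :
    pathWeight p ρ (x ∘ Fin.rev) = pathWeight p ρ x * Real.exp (-entropyProduction p ρ x) := by
  have boundary : ρ (x 0) * Real.exp (-(Real.log (ρ (x 0)) - Real.log (ρ (x (Fin.last N))))) =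
      ρ (x (Fin.last N)) :=
    mul_exp_neg_log_sub_log (hρ _).le (hρ _).le (iff_of_false (hρ _).ne' (hρ _).ne')
  have step (k : Fin N) : p (x k.succ) (x k.castSucc) *
      Real.exp (-(Real.log (p (x k.succ) (x k.castSucc)) -
        Real.log (p (x k.castSucc) (x k.succ)))) = p (x k.castSucc) (x k.succ) :=
    mul_exp_neg_log_sub_log (hp _ _) (hp _ _) ⟨hrev _ _, hrev _ _⟩
  rw [pathWeight_comp_rev, pathWeight, entropyProduction, neg_add, ← Finset.sum_neg_distrib,
    Real.exp_add, Real.exp_sum, mul_mul_mul_comm, boundary, ← Finset.prod_mul_distrib]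
  simp only [step]

-- A path with a zero factor has weight zero, so the value `W` takes there does not affect the sums.
theorem markov_chain_path_fluctuation_symmetry_general [Fintype S] (hp : ∀ a b, 0 ≤ p a b)
    (hrev : ∀ a b, p a b = 0 → p b a = 0) (hρ : ∀ a, 0 < ρ a) (N : ℕ) (lam : ℝ) :
    ∑ x : Fin (N + 1) → S, pathWeight p ρ x * Real.exp (-lam * entropyProduction p ρ x) =
      ∑ x : Fin (N + 1) → S,
        pathWeight p ρ x * Real.exp (-(1 - lam) * entropyProduction p ρ x) :=
  sum_mul_exp_neg_mul_eq_of_bijective Fin.rev_bijective.comp_right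
    (entropyProduction_comp_rev p ρ) (pathWeight_comp_rev_eq_mul_exp hp hrev hρ) lam

end Path

/-- Exact finite-time Kurchan/Lebowitz–Spohn fluctuation symmetry for a stationary
finite-state Markov chain: with path measure
`P_N(x) = ρ(x_0) Π_{k<N} p(x_{k+1}|x_k)` and
`W_N(x) = ln ρ(x_0) − ln ρ(x_N) + Σ_{k<N} [ln p(x_{k+1}|x_k) − ln p(x_k|x_{k+1})]`,
one has `Σ_x P_N(x) e^{−λ W_N(x)} = Σ_x P_N(x) e^{−(1−λ) W_N(x)}` for every `λ`.
Here `p a b` denotes the transition probability `p(a|b)`. -/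
theorem markov_chain_path_fluctuation_symmetry
    {S : Type*} [Fintype S] [Nonempty S] [DecidableEq S]
    (p : S → S → ℝ) (hp : ∀ a b, 0 < p a b) (hpsum : ∀ b, ∑ a, p a b = 1)
    (ρ : S → ℝ) (hρ : ∀ b, 0 < ρ b) (hρsum : ∑ b, ρ b = 1)
    (hstat : ∀ a, ∑ b, p a b * ρ b = ρ a)
    (N : ℕ) (hN : 1 ≤ N)
    (P : (Fin (N + 1) → S) → ℝ)
    (hP : ∀ x, P x = ρ (x 0) * ∏ k : Fin N, p (x k.succ) (x k.castSucc))
    (W : (Fin (N + 1) → S) → ℝ)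
    (hW : ∀ x, W x = Real.log (ρ (x 0)) - Real.log (ρ (x (Fin.last N))) +
      ∑ k : Fin N,
        (Real.log (p (x k.succ) (x k.castSucc)) -
          Real.log (p (x k.castSucc) (x k.succ)))) :
    ∀ lam : ℝ,
      ∑ x : Fin (N + 1) → S, P x * Real.exp (-lam * W x) =
        ∑ x : Fin (N + 1) → S, P x * Real.exp (-(1 - lam) * W x) := by
  obtain rfl : P = pathWeight p ρ := funext hP
  obtain rfl : W = entropyProduction p ρ := funext hW
  exact markov_chain_path_fluctuation_symmetry_general (fun a b => (hp a b).le)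
    (fun a b h => absurd h (hp a b).ne') hρ N
end
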